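/- Let n ≥ 12 and let H be as in the Setup (a connected {P,C}-free 3-graph on n vertices containing a copy of P_2 ∪ K_3, with U, W_0, W_1 and H_1 defined from a fixed such copy). If |W_1| ≥ 5 and H_1 ≠ ∅, then |H| < binom(n−6, 2) + 10. -/

import Mathlib

/-- A 3-graph: a finite vertex set together with a finite set of edges
(intended to be 3-element subsets of the vertex set). -/
structure ThreeGraph where
  verts : Finset ℕ
  edges : Finset (Finset ℕ)

namespace ThreeGraph

/-- `G` is a genuine 3-uniform hypergraph: every edge is a 3-element subset of the vertex set. -/
def IsValid (G : ThreeGraph) : Prop :=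
  ∀ e ∈ G.edges, e.card = 3 ∧ e ⊆ G.verts

/-- `H.ContainsCopy F` means `F ⊆ H`: there is an injective map of the vertices of `F`
into those of `H` carrying every edge of `F` to an edge of `H`. -/
def ContainsCopy (H F : ThreeGraph) : Prop :=
  ∃ f : ℕ → ℕ, Set.InjOn f ↑F.verts ∧ (∀ v ∈ F.verts, f v ∈ H.verts) ∧
    ∀ e ∈ F.edges, e.image f ∈ H.edges

/-- `H.Free F` : `H` contains no copy of `F`. -/
def Free (H F : ThreeGraph) : Prop := ¬ H.ContainsCopy F

/-- `IsoCopy F H` : `H` is isomorphic to `F`. -/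
def IsoCopy (F H : ThreeGraph) : Prop :=
  ∃ f : ℕ → ℕ, Set.InjOn f ↑F.verts ∧ F.verts.image f = H.verts ∧
    F.edges.image (Finset.image f) = H.edges

/-- Connectivity: any two vertices are joined by a sequence of vertices in which
consecutive ones lie in a common edge. -/
def Connected (G : ThreeGraph) : Prop :=
  ∀ u ∈ G.verts, ∀ v ∈ G.verts,
    Relation.ReflTransGen (fun a b => ∃ e ∈ G.edges, a ∈ e ∧ b ∈ e) u v

/-- Shift all vertices by `k`. -/
def shiftBy (G : ThreeGraph) (k : ℕ) : ThreeGraph :=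
  ⟨G.verts.image (· + k), G.edges.image (Finset.image (· + k))⟩

/-- Vertex-disjoint union of two 3-graphs. -/
def dUnion (G H : ThreeGraph) : ThreeGraph :=
  ⟨G.verts ∪ (H.shiftBy (G.verts.sup id + 1)).verts,
   G.edges ∪ (H.shiftBy (G.verts.sup id + 1)).edges⟩

end ThreeGraph

/-- The loose 3-uniform path of length 3. -/
def pathP : ThreeGraph :=
  ⟨{0,1,2,3,4,5,6}, {{0,1,2},{2,3,4},{4,5,6}}⟩

/-- The triangle `C`. -/
def triangleC : ThreeGraph :=
  ⟨{0,1,2,3,4,5}, {{0,1,2},{2,3,4},{4,5,0}}⟩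

/-- The matching `M`: two disjoint edges. -/
def matchingM : ThreeGraph :=
  ⟨{0,1,2,3,4,5}, {{0,1,2},{3,4,5}}⟩

/-- `P_2`: two edges sharing exactly one vertex. -/
def pairP2 : ThreeGraph :=
  ⟨{0,1,2,3,4}, {{0,1,2},{2,3,4}}⟩

/-- The complete 3-graph `K_n`. -/
def KK (n : ℕ) : ThreeGraph :=
  ⟨Finset.range n, (Finset.range n).powersetCard 3⟩

/-- The full star `S_n` with center `0`. -/
def SS (n : ℕ) : ThreeGraph :=
  ⟨Finset.range n, ((Finset.range n).powersetCard 3).filter (fun e => 0 ∈ e)⟩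

/-- `G_1(n)` with `x,y,z,v = 0,1,2,3`. -/
def G1 (n : ℕ) : ThreeGraph :=
  ⟨Finset.range n,
   insert {0,1,2}
     (((Finset.range n).powersetCard 3).filter
       (fun h => 3 ∈ h ∧ (h ∩ ({0,1,2} : Finset ℕ)).Nonempty))⟩

/-- `G_2(n)` with `x,y,z = 0,1,2`. -/
def G2 (n : ℕ) : ThreeGraph :=
  ⟨Finset.range n,
   insert {0,1,2}
     (((Finset.range n).powersetCard 3).filter
       (fun h => (h ∩ ({0,1,2} : Finset ℕ)).card = 2))⟩

/-- `G_3(n)` with `x,y₁,y₂,z₁,z₂ = 0,1,2,3,4`. -/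
def G3 (n : ℕ) : ThreeGraph :=
  ⟨Finset.range n,
   ((({0,1,2,3,4} : Finset ℕ).powersetCard 3) \ {{1,2,3},{1,2,4}}) ∪
     ((Finset.range n \ ({0,1,2,3,4} : Finset ℕ)).biUnion (fun w => {{0,3,w},{0,4,w}}))⟩

/-- `K_5^{+t}`: `K_5` on `{0,…,4}` with `a,b = 0,1` and `t` pendant edges `{0,1,v}`. -/
def K5plus (t : ℕ) : ThreeGraph :=
  ⟨Finset.range (5 + t),
   ((Finset.range 5).powersetCard 3) ∪ ((Finset.Ico 5 (5 + t)).image (fun v => {0,1,v}))⟩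

/-- The comet `Co(n)`: a `K_4` on `{0,1,2,3}` and a full star on `{0} ∪ {4,…,n-1}`
with center `0`. -/
def comet (n : ℕ) : ThreeGraph :=
  ⟨Finset.range n,
   (({0,1,2,3} : Finset ℕ).powersetCard 3) ∪
     (((insert 0 (Finset.Ico 4 n)).powersetCard 3).filter (fun e => 0 ∈ e))⟩

/-- `W = V(H) \ U`. -/
def Wset (H : ThreeGraph) (U : Finset ℕ) : Finset ℕ := H.verts \ U

/-- `W_0`: the vertices of `W` lying in no edge of `H` entirely contained in `W`. -/
def W0set (H : ThreeGraph) (U : Finset ℕ) : Finset ℕ :=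
  (Wset H U).filter (fun v => ∀ e ∈ H.edges, e ⊆ Wset H U → v ∉ e)

/-- `W_1 = W \ W_0`. -/
def W1set (H : ThreeGraph) (U : Finset ℕ) : Finset ℕ :=
  Wset H U \ W0set H U

/-- `H_1`: the edges of `H` meeting both `U` and `W_1`. -/
def H1set (H : ThreeGraph) (U : Finset ℕ) : Finset (Finset ℕ) :=
  H.edges.filter (fun e => (e ∩ U).Nonempty ∧ (e ∩ W1set H U).Nonempty)

/-- `H[U]`: the edges of `H` entirely contained in `U`. -/
def HUset (H : ThreeGraph) (U : Finset ℕ) : Finset (Finset ℕ) :=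
  H.edges.filter (fun e => e ⊆ U)

/-!
Let `A` be the complement of `B = W₁`, and let `x` be the common vertex of the two edges `P` and
`Q` with `U = P ∪ Q`. Avoiding loose paths forces every edge meeting both `A` and `B` to lie in
`B ∪ {x}` or to be a pendant edge `P \ {x} ∪ {w}` or `Q \ {x} ∪ {w}` with `w ∈ B`.

The count rests on two facts. A triangle-free triple system has at most as many edges as its shadow
has pairs: by Hall's theorem each edge contains pairs whose degrees have reciprocals summing to at
least one. Moreover, if some edge meets a vertex set only in `v`, then inside this set no edge
through `v` meets an edge avoiding `v` in exactly one vertex. Such a *sealed* vertex pushes the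
number of edges on `m` vertices from `binom(m, 2)` down to about `binom(m - 1, 2)`. The vertex `x`
is sealed in `A` or in a large part of it, the vertex `w` of a pendant edge is sealed in
`B ∪ {x}`, and the pendant edges are paid for by the saving this causes. In total
`|H| ≤ binom(|A| - 1, 2) + binom(|B| - 1, 2) + 3` with `|A|, |B| ≥ 5`.
-/

section

open Finset
open scoped FinsetFamily

theorem add_choose_two (m n : ℕ) : (m + n).choose 2 = m.choose 2 + n.choose 2 + m * n := by
  induction n with
  | zero => simp
  | succ n ih =>
    rw [← add_assoc, Nat.choose_succ_succ', Nat.choose_succ_succ' n, ih, Nat.choose_one_right,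
      Nat.choose_one_right]
    ring

theorem choose_two_eq_choose_two_pred_add (n : ℕ) : n.choose 2 = (n - 1).choose 2 + (n - 1) := by
  cases n <;> simp [Nat.choose_succ_succ', add_comm]

theorem two_mul_le_choose_two_add_three (k : ℕ) : 2 * k ≤ k.choose 2 + 3 := by
  obtain h | h := lt_or_ge k 3
  · interval_cases k <;> decide
  · obtain ⟨j, rfl⟩ := Nat.exists_eq_add_of_le' h
    rw [add_choose_two, Nat.choose_succ_self_right]
    omega

theorem choose_two_add_choose_two_lt {a b : ℕ} (ha : 5 ≤ a) (hb : 5 ≤ b) :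
    (a - 1).choose 2 + (b - 1).choose 2 + 3 < (a + b - 6).choose 2 + 10 := by
  obtain ⟨i, rfl⟩ := Nat.exists_eq_add_of_le' ha
  obtain ⟨j, rfl⟩ := Nat.exists_eq_add_of_le' hb
  rw [show i + 5 - 1 = i + 4 by omega, show j + 5 - 1 = j + 4 by omega,
    show i + 5 + (j + 5) - 6 = i + j + 4 by omega]
  simp only [add_choose_two, show Nat.choose 4 2 = 6 by rfl]
  have := Nat.zero_le (i * j)
  omega

theorem one_le_sum_inv_card_add_one_of_no_transversal {α ι : Type*} [Fintype ι]
    {t : ι → Finset α} (ht : ¬ ∃ f : ι → α, f.Injective ∧ ∀ i, f i ∈ t i) :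
    1 ≤ ∑ i, ((#(t i) : ℚ) + 1)⁻¹ := by
  classical
  obtain ⟨s, hs⟩ : ∃ s : Finset ι, #(s.biUnion t) < #s := by
    by_contra! h
    exact ht ((all_card_le_biUnion_card_iff_exists_injective t).mp h)
  have hs0 : (0 : ℚ) < #s := by exact_mod_cast (Nat.zero_le _).trans_lt hs
  have hle : ∀ i ∈ s, (#s : ℚ)⁻¹ ≤ ((#(t i) : ℚ) + 1)⁻¹ := by
    intro i hi
    have : #(t i) + 1 ≤ #s := (card_le_card (subset_biUnion_of_mem t hi)).trans_lt hs
    gcongr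
    exact_mod_cast this
  calc (1 : ℚ) = ∑ _i ∈ s, (#s : ℚ)⁻¹ := by
        rw [sum_const, nsmul_eq_mul, mul_inv_cancel₀ hs0.ne']
    _ ≤ ∑ i ∈ s, ((#(t i) : ℚ) + 1)⁻¹ := sum_le_sum hle
    _ ≤ ∑ i, ((#(t i) : ℚ) + 1)⁻¹ :=
        sum_le_sum_of_subset_of_nonneg (subset_univ s) fun _ _ _ ↦ by positivity

section TripleSystems

variable {α : Type*} [DecidableEq α] {E F : Finset (Finset α)} {V : Finset α}

/-! ### Triangle-free triple systems -/

/-- `E` contains no loose path of length three: if `e, f, g ∈ E` are consecutive edges meeting in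
single vertices, then `e` and `g` meet. -/
def LoosePathFree (E : Finset (Finset α)) : Prop :=
  ∀ ⦃e⦄, e ∈ E → ∀ ⦃f⦄, f ∈ E → ∀ ⦃g⦄, g ∈ E → #(e ∩ f) = 1 → #(f ∩ g) = 1 → ¬ Disjoint e g

/-- `E` contains no loose triangle: three edges meeting pairwise in single vertices have a common
vertex. -/
def LooseTriangleFree (E : Finset (Finset α)) : Prop :=
  ∀ ⦃e⦄, e ∈ E → ∀ ⦃f⦄, f ∈ E → ∀ ⦃g⦄, g ∈ E →
    #(e ∩ f) = 1 → #(f ∩ g) = 1 → #(e ∩ g) = 1 → (e ∩ f ∩ g).Nonempty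

theorem LooseTriangleFree.mono (hE : LooseTriangleFree E) (hF : F ⊆ E) : LooseTriangleFree F :=
  fun _ he _ hf _ hg ↦ hE (hF he) (hF hf) (hF hg)

theorem card_filter_superset_erase_le {e : Finset α} {v : α} (hE : (E : Set (Finset α)).Sized 3)
    (he : e ∈ E) (hv : v ∈ e) :
    #{f ∈ E | e.erase v ⊆ f} ≤ #{u ∈ E.biUnion id | u ∉ e ∧ insert u (e.erase v) ∈ E} + 1 := by
  have hsub : {f ∈ E | e.erase v ⊆ f} ⊆
      insert e ({u ∈ E.biUnion id | u ∉ e ∧ insert u (e.erase v) ∈ E}.image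
        fun u ↦ insert u (e.erase v)) := by
    intro f hf
    obtain ⟨hfE, hef⟩ := mem_filter.mp hf
    have hcard : #(f \ e.erase v) = 1 := by
      rw [card_sdiff_of_subset hef, hE hfE, card_erase_of_mem hv, hE he]
    obtain ⟨u, hu⟩ := card_eq_one.mp hcard
    have hfu : insert u (e.erase v) = f := by
      rw [insert_eq, ← hu, sdiff_union_of_subset hef]
    by_cases hue : u ∈ e
    · have hu' : u ∉ e.erase v := (mem_sdiff.mp (hu ▸ mem_singleton_self u)).2
      have huv : u = v := by simpa [hue] using hu'
      rw [mem_insert]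
      left
      rw [← hfu, huv, insert_erase hv]
    · refine mem_insert_of_mem (mem_image.mpr ⟨u, ?_, hfu⟩)
      rw [mem_filter, hfu]
      exact ⟨mem_biUnion.mpr ⟨f, hfE, hfu ▸ mem_insert_self u _⟩, hue, hfE⟩
  exact (card_le_card hsub).trans ((card_insert_le _ _).trans (by gcongr; exact card_image_le))

theorem LooseTriangleFree.no_transversal {e : Finset α} (hC : LooseTriangleFree E) (he : #e = 3)
    (f : e → α) (hf : f.Injective) (hfe : ∀ v, f v ∉ e)
    (hfE : ∀ v : e, insert (f v) (e.erase v) ∈ E) : False := by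
  obtain ⟨a, b, c, hab, hac, hbc, rfl⟩ := card_eq_three.mp he
  have hT := hC (hfE ⟨a, by simp⟩) (hfE ⟨b, by simp⟩) (hfE ⟨c, by simp⟩)
  have hab' := hf.ne (a₁ := ⟨a, by simp⟩) (a₂ := ⟨b, by simp⟩) (by simpa)
  have hac' := hf.ne (a₁ := ⟨a, by simp⟩) (a₂ := ⟨c, by simp⟩) (by simpa)
  have hbc' := hf.ne (a₁ := ⟨b, by simp⟩) (a₂ := ⟨c, by simp⟩) (by simpa)
  have ha := hfe ⟨a, by simp⟩
  have hb := hfe ⟨b, by simp⟩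
  have hc := hfe ⟨c, by simp⟩
  revert hT hab' hac' hbc' ha hb hc
  generalize f ⟨a, _⟩ = a'
  generalize f ⟨b, _⟩ = b'
  generalize f ⟨c, _⟩ = c'
  intro hT hab' hac' hbc' ha hb hc
  simp only [mem_insert, mem_singleton, not_or] at ha hb hc
  have h₁ : insert a' (({a, b, c} : Finset α).erase a) ∩ insert b' (({a, b, c} : Finset α).erase b)
      = {c} := by ext; grind
  have h₂ : insert b' (({a, b, c} : Finset α).erase b) ∩ insert c' (({a, b, c} : Finset α).erase c)
      = {a} := by ext; grind
  have h₃ : insert a' (({a, b, c} : Finset α).erase a) ∩ insert c' (({a, b, c} : Finset α).erase c)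
      = {b} := by ext; grind
  obtain ⟨z, hz⟩ := hT (card_eq_one.mpr ⟨c, h₁⟩) (card_eq_one.mpr ⟨a, h₂⟩) (card_eq_one.mpr ⟨b, h₃⟩)
  rw [h₁] at hz
  grind

theorem LooseTriangleFree.one_le_sum_inv_card_filter {e : Finset α} (hC : LooseTriangleFree E)
    (hE : (E : Set (Finset α)).Sized 3) (he : e ∈ E) :
    1 ≤ ∑ p ∈ ∂ E with p ⊆ e, (#{f ∈ E | p ⊆ f} : ℚ)⁻¹ := by
  let t (v : e) : Finset α := {u ∈ E.biUnion id | u ∉ e ∧ insert u (e.erase v) ∈ E}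
  have ht : ¬ ∃ f : e → α, f.Injective ∧ ∀ v, f v ∈ t v := by
    rintro ⟨f, hf, hft⟩
    exact hC.no_transversal (hE he) f hf (fun v ↦ (mem_filter.mp (hft v)).2.1)
      fun v ↦ (mem_filter.mp (hft v)).2.2
  calc (1 : ℚ) ≤ ∑ v : e, ((#(t v) : ℚ) + 1)⁻¹ :=
        one_le_sum_inv_card_add_one_of_no_transversal ht
    _ ≤ ∑ v : e, (#{f ∈ E | e.erase v ⊆ f} : ℚ)⁻¹ := by
        refine sum_le_sum fun v _ ↦ inv_anti₀ ?_ ?_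
        · exact_mod_cast card_pos.mpr ⟨e, mem_filter.mpr ⟨he, erase_subset _ _⟩⟩
        · exact_mod_cast card_filter_superset_erase_le hE he v.2
    _ = ∑ p ∈ e.image e.erase, (#{f ∈ E | p ⊆ f} : ℚ)⁻¹ := by
        rw [sum_image (erase_injOn e)]
        exact sum_coe_sort e fun v ↦ (#{f ∈ E | e.erase v ⊆ f} : ℚ)⁻¹
    _ ≤ ∑ p ∈ ∂ E with p ⊆ e, (#{f ∈ E | p ⊆ f} : ℚ)⁻¹ := by
        refine sum_le_sum_of_subset_of_nonneg ?_ fun _ _ _ ↦ by positivity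
        rw [image_subset_iff]
        exact fun v hv ↦ mem_filter.mpr ⟨erase_mem_shadow he hv, erase_subset _ _⟩

-- Double counting: each edge spreads weight at least one over its pairs, each pair receives one.
theorem LooseTriangleFree.card_le_card_shadow (hC : LooseTriangleFree E)
    (hE : (E : Set (Finset α)).Sized 3) : #E ≤ #(∂ E) := by
  have hpair : ∀ p ∈ ∂ E, ∑ _e ∈ E with p ⊆ _e, (#{f ∈ E | p ⊆ f} : ℚ)⁻¹ = 1 := by
    intro p hp
    obtain ⟨e, he, v, -, rfl⟩ := mem_shadow_iff.mp hp
    have : (#{f ∈ E | e.erase v ⊆ f} : ℚ) ≠ 0 := by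
      exact_mod_cast card_ne_zero_of_mem (mem_filter.mpr ⟨he, erase_subset v e⟩)
    rw [sum_const, nsmul_eq_mul, mul_inv_cancel₀ this]
  have : (#E : ℚ) ≤ #(∂ E) := calc
    (#E : ℚ) ≤ ∑ e ∈ E, ∑ p ∈ ∂ E with p ⊆ e, (#{f ∈ E | p ⊆ f} : ℚ)⁻¹ := by
        simpa using sum_le_sum fun e he ↦ hC.one_le_sum_inv_card_filter hE he
    _ = ∑ p ∈ ∂ E, ∑ _e ∈ E with p ⊆ _e, (#{f ∈ E | p ⊆ f} : ℚ)⁻¹ :=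
        sum_comm' fun _ _ ↦ by simp only [mem_filter]; tauto
    _ = #(∂ E) := by rw [sum_congr rfl hpair]; simp
  exact_mod_cast this

theorem LooseTriangleFree.card_le_choose_two (hC : LooseTriangleFree E)
    (hE : E ⊆ V.powersetCard 3) : #E ≤ (#V).choose 2 := by
  have hsized : (E : Set (Finset α)).Sized 3 := fun e he ↦ (mem_powersetCard.mp (hE he)).2
  refine (hC.card_le_card_shadow hsized).trans ?_
  rw [← card_powersetCard]
  refine card_le_card fun p hp ↦ mem_powersetCard.mpr ⟨?_, hsized.shadow hp⟩
  obtain ⟨e, he, v, -, rfl⟩ := mem_shadow_iff.mp hp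
  exact (erase_subset v e).trans (mem_powersetCard.mp (hE he)).1

theorem LooseTriangleFree.card_filter_disjoint_le (hC : LooseTriangleFree E)
    (hE : E ⊆ V.powersetCard 3) (S : Finset α) :
    #{e ∈ E | Disjoint e S} ≤ (#(V \ S)).choose 2 := by
  refine (hC.mono (filter_subset _ _)).card_le_choose_two fun e he ↦ ?_
  obtain ⟨heE, heS⟩ := mem_filter.mp he
  obtain ⟨heV, hcard⟩ := mem_powersetCard.mp (hE heE)
  exact mem_powersetCard.mpr ⟨subset_sdiff.mpr ⟨heV, heS⟩, hcard⟩

/-! ### Sealed vertices -/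

/-- No edge through `v` meets an edge avoiding `v` in a single vertex. -/
def IsSealed (F : Finset (Finset α)) (v : α) : Prop :=
  ∀ ⦃e⦄, e ∈ F → ∀ ⦃f⦄, f ∈ F → v ∈ e → v ∉ f → #(e ∩ f) ≠ 1

/-- The neighbourhood of `v` in a set system: the other vertices of the edges through `v`. -/
def neighbors (F : Finset (Finset α)) (v : α) : Finset α :=
  ({e ∈ F | v ∈ e}.biUnion id).erase v

theorem mem_neighbors {u v : α} : u ∈ neighbors F v ↔ u ≠ v ∧ ∃ e ∈ F, v ∈ e ∧ u ∈ e := by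
  simp only [neighbors, mem_erase, mem_biUnion, mem_filter, id, and_assoc]

theorem notMem_neighbors_self (v : α) : v ∉ neighbors F v := notMem_erase _ _

theorem subset_insert_neighbors {e : Finset α} {v : α} (he : e ∈ F) (hv : v ∈ e) :
    e ⊆ insert v (neighbors F v) := fun u hu ↦ by
  rw [mem_insert, mem_neighbors]
  exact (eq_or_ne u v).imp_right fun h ↦ ⟨h, e, he, hv, hu⟩

theorem IsSealed.mono {v : α} (hv : IsSealed F v) (hE : E ⊆ F) : IsSealed E v :=
  fun _ he _ hf ↦ hv (hE he) (hE hf)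

section Sealed

variable {v : α}

theorem IsSealed.erase_subset {e f : Finset α} (hv : IsSealed F v)
    (hF : (F : Set (Finset α)).Sized 3) (he : e ∈ F) (hf : f ∈ F) (hve : v ∈ e) (hvf : v ∉ f)
    (hef : ¬ Disjoint e f) : e.erase v ⊆ f := by
  have hsub : e ∩ f ⊆ e.erase v := fun u hu ↦
    mem_erase.mpr ⟨fun h ↦ hvf (h ▸ (mem_inter.mp hu).2), (mem_inter.mp hu).1⟩
  have hpos : 0 < #(e ∩ f) := card_pos.mpr (not_disjoint_iff_nonempty_inter.mp hef)
  have hne := hv he hf hve hvf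
  have heq : e ∩ f = e.erase v :=
    eq_of_subset_of_card_le hsub (by rw [card_erase_of_mem hve, hF he]; omega)
  exact heq ▸ inter_subset_right

theorem IsSealed.subset_insert_of_subset_neighbors {e f : Finset α} (hv : IsSealed F v)
    (hF : (F : Set (Finset α)).Sized 3) (he : e ∈ F) (hf : f ∈ F) (hfv : f ⊆ neighbors F v)
    (hef : ¬ Disjoint e f) : e ⊆ insert v f := by
  have hvf : v ∉ f := fun h ↦ notMem_neighbors_self v (hfv h)
  by_cases hve : v ∈ e
  · exact subset_insert_iff.mpr (hv.erase_subset hF he hf hve hvf hef)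
  have hlink : ∀ c ∈ f, ∃ g ∈ F, v ∈ g ∧ c ∈ g.erase v ∧ g.erase v ⊆ f := by
    intro c hc
    obtain ⟨hcv, g, hg, hvg, hcg⟩ := mem_neighbors.mp (hfv hc)
    exact ⟨g, hg, hvg, mem_erase.mpr ⟨hcv, hcg⟩,
      hv.erase_subset hF hg hf hvg hvf (not_disjoint_iff.mpr ⟨c, hcg, hc⟩)⟩
  have hmeet : ∀ g ∈ F, v ∈ g → ¬ Disjoint g e → g.erase v ⊆ e := fun g hg hvg ↦
    hv.erase_subset hF hg he hvg hve
  have htwo : 2 ≤ #(e ∩ f) := by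
    obtain ⟨a, hae, haf⟩ := not_disjoint_iff.mp hef
    obtain ⟨g, hg, hvg, hag, hgf⟩ := hlink a haf
    have hge := hmeet g hg hvg (not_disjoint_iff.mpr ⟨a, mem_of_mem_erase hag, hae⟩)
    calc 2 = #(g.erase v) := by rw [card_erase_of_mem hvg, hF hg]
      _ ≤ #(e ∩ f) := card_le_card (subset_inter hge hgf)
  have hfe : f ⊆ e := by
    intro c hc
    obtain ⟨g, hg, hvg, hcg, hgf⟩ := hlink c hc
    have hcard : #f < #(g.erase v) + #(e ∩ f) := by
      rw [card_erase_of_mem hvg, hF hg, hF hf]; omega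
    obtain ⟨a, ha⟩ := inter_nonempty_of_card_lt_card_add_card hgf inter_subset_right hcard
    obtain ⟨hag, hae, -⟩ := by simpa only [mem_inter] using ha
    exact hmeet g hg hvg (not_disjoint_iff.mpr ⟨a, mem_of_mem_erase hag, hae⟩) hcg
  rw [← eq_of_subset_of_card_le hfe (by rw [hF he, hF hf])]
  exact subset_insert v f

theorem IsSealed.card_filter_not_disjoint_le_four {f : Finset α} (hv : IsSealed F v)
    (hF : (F : Set (Finset α)).Sized 3) (hf : f ∈ F) (hfv : f ⊆ neighbors F v) :
    #{e ∈ F | ¬ Disjoint e f} ≤ 4 := by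
  have hvf : v ∉ f := fun h ↦ notMem_neighbors_self v (hfv h)
  calc #{e ∈ F | ¬ Disjoint e f} ≤ #((insert v f).powersetCard 3) := by
        refine card_le_card fun e he ↦ ?_
        obtain ⟨heF, hef⟩ := mem_filter.mp he
        exact mem_powersetCard.mpr ⟨hv.subset_insert_of_subset_neighbors hF heF hf hfv hef, hF heF⟩
    _ = 4 := by rw [card_powersetCard, card_insert_of_notMem hvf, hF hf]; rfl

theorem card_filter_mem_subset_le {N : Finset α} (hF : (F : Set (Finset α)).Sized 3)
    (hFN : ∀ e ∈ F, v ∈ e ∧ e ⊆ insert v N) : #F ≤ (#N).choose 2 := by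
  rw [← card_powersetCard]
  refine card_le_card_of_injOn (erase · v) (fun e he ↦ ?_) fun e he f hf hef ↦ ?_
  · obtain ⟨hve, heN⟩ := hFN e he
    rw [mem_coe, mem_powersetCard, card_erase_of_mem hve, hF he]
    exact ⟨subset_insert_iff.mp heN, rfl⟩
  · rw [← insert_erase (hFN e he).1, ← insert_erase (hFN f hf).1]
    exact congrArg (insert v) hef

theorem IsSealed.card_filter_subset_le (hv : IsSealed F v) (hC : LooseTriangleFree F)
    (hF : (F : Set (Finset α)).Sized 3) :
    #{e ∈ F | e ⊆ insert v (neighbors F v)} ≤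
      (#(neighbors F v)).choose 2 + if #(neighbors F v) = 3 then 1 else 0 := by
  set N := neighbors F v
  by_cases hN : ∃ f ∈ F, f ⊆ N
  · obtain ⟨f, hf, hfN⟩ := hN
    have hvN : v ∉ N := notMem_neighbors_self v
    have hcard : #(N \ f) + 3 = #N := by
      rw [← hF hf, card_sdiff_add_card_eq_card hfN]
    have hdisj : #{e ∈ {e ∈ F | e ⊆ insert v N} | Disjoint e f} ≤ (#(N \ f) + 1).choose 2 := by
      rw [← card_insert_of_notMem fun h ↦ hvN (mem_sdiff.mp h).1,
        ← insert_sdiff_of_notMem _ fun h ↦ hvN (hfN h)]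
      refine (hC.mono (filter_subset _ _)).card_filter_disjoint_le (fun e he ↦ ?_) f
      obtain ⟨heF, heN⟩ := mem_filter.mp he
      exact mem_powersetCard.mpr ⟨heN, hF heF⟩
    have hmeet : #{e ∈ {e ∈ F | e ⊆ insert v N} | ¬ Disjoint e f} ≤ 4 :=
      (card_le_card (filter_subset_filter _ (filter_subset _ _))).trans
        (hv.card_filter_not_disjoint_le_four hF hf hfN)
    rw [← card_filter_add_card_filter_not (fun e ↦ Disjoint e f), ← hcard]
    rw [add_choose_two] at hdisj ⊢
    obtain h | h := Nat.eq_zero_or_pos #(N \ f)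
    · simp only [h, zero_add, if_true, Nat.choose] at hdisj ⊢
      omega
    · norm_num [Nat.choose] at hdisj ⊢
      omega
  · push Not at hN
    refine le_add_right (card_filter_mem_subset_le (v := v)
      (hF.mono (coe_subset.mpr (filter_subset _ _))) fun e he ↦ ?_)
    obtain ⟨heF, heN⟩ := mem_filter.mp he
    refine ⟨by_contra fun hve ↦ hN e heF ?_, heN⟩
    exact (subset_insert_iff_of_notMem hve).mp heN

theorem IsSealed.erase_eq_erase {t : α} {f g : Finset α} (hv : IsSealed F v)
    (hF : (F : Set (Finset α)).Sized 3) (ht : t ∉ insert v (neighbors F v)) (hf : f ∈ F)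
    (htf : t ∈ f) (hg : g ∈ F) (hvg : v ∈ g) (hgf : ¬ Disjoint g f) : f.erase t = g.erase v := by
  have hvf : v ∉ f := fun h ↦ ht (subset_insert_neighbors hf h htf)
  have hsub := hv.erase_subset hF hg hf hvg hvf hgf
  refine (eq_of_subset_of_card_le (subset_erase.mpr ⟨hsub, fun h ↦ ?_⟩) ?_).symm
  · exact ht (subset_insert_neighbors hg hvg (mem_of_mem_erase h))
  · rw [card_erase_of_mem htf, card_erase_of_mem hvg, hF hf, hF hg]

theorem IsSealed.two_mul_card_filter_le {t : α} (hv : IsSealed F v)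
    (hF : (F : Set (Finset α)).Sized 3) (ht : t ∉ insert v (neighbors F v)) :
    2 * #{f ∈ F | t ∈ f ∧ ¬ Disjoint f (neighbors F v)} ≤ #(neighbors F v) := by
  set N := neighbors F v
  have hdisj : (({f ∈ F | t ∈ f ∧ ¬ Disjoint f N} : Finset _) : Set (Finset α)).PairwiseDisjoint
      (erase · t) := by
    intro f hf f' hf' hne
    obtain ⟨hfF, htf, hfN⟩ := mem_filter.mp (mem_coe.mp hf)
    obtain ⟨hfF', htf', -⟩ := mem_filter.mp (mem_coe.mp hf')
    obtain ⟨w, hwf, hwN⟩ := not_disjoint_iff.mp hfN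
    obtain ⟨-, g, hg, hvg, hwg⟩ := mem_neighbors.mp hwN
    have hfg := hv.erase_eq_erase hF ht hfF htf hg hvg (not_disjoint_iff.mpr ⟨w, hwg, hwf⟩)
    refine disjoint_left.mpr fun u hu hu' ↦ hne ?_
    have hug : u ∈ g := mem_of_mem_erase (hfg.subset hu)
    have hfg' := hv.erase_eq_erase hF ht hfF' htf' hg hvg
      (not_disjoint_iff.mpr ⟨u, hug, mem_of_mem_erase hu'⟩)
    rw [← insert_erase htf, ← insert_erase htf', hfg, hfg']
  calc 2 * #{f ∈ F | t ∈ f ∧ ¬ Disjoint f N}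
      = ∑ f ∈ F with t ∈ f ∧ ¬ Disjoint f N, #(f.erase t) := by
        rw [mul_comm, ← smul_eq_mul, ← sum_const]
        refine sum_congr rfl fun f hf ↦ ?_
        obtain ⟨hfF, htf, -⟩ := mem_filter.mp hf
        rw [card_erase_of_mem htf, hF hfF]
    _ = #(({f ∈ F | t ∈ f ∧ ¬ Disjoint f N} : Finset _).biUnion (erase · t)) :=
        (card_biUnion hdisj).symm
    _ ≤ #N := by
        refine card_le_card (biUnion_subset.mpr fun f hf ↦ ?_)
        obtain ⟨hfF, htf, hfN⟩ := mem_filter.mp hf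
        obtain ⟨w, hwf, hwN⟩ := not_disjoint_iff.mp hfN
        obtain ⟨-, g, hg, hvg, hwg⟩ := mem_neighbors.mp hwN
        rw [hv.erase_eq_erase hF ht hfF htf hg hvg (not_disjoint_iff.mpr ⟨w, hwg, hwf⟩)]
        exact subset_insert_iff.mp (subset_insert_neighbors hg hvg)

theorem neighbors_subset (hF : F ⊆ V.powersetCard 3) : neighbors F v ⊆ V := fun _ hu ↦ by
  obtain ⟨-, e, he, -, hue⟩ := mem_neighbors.mp hu
  exact (mem_powersetCard.mp (hF he)).1 hue

theorem card_neighbors_lt (hF : F ⊆ V.powersetCard 3) (hv : v ∈ V) : #(neighbors F v) < #V := by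
  rw [← Nat.succ_le_iff, Nat.succ_eq_add_one, ← card_insert_of_notMem (notMem_neighbors_self v)]
  exact card_le_card (insert_subset hv (neighbors_subset hF))

theorem IsSealed.card_le {r : ℕ} (hv : IsSealed F v) (hC : LooseTriangleFree F)
    (hF : F ⊆ V.powersetCard 3) (hvV : v ∈ V) (hr : #V = #(neighbors F v) + 1 + r) :
    #F ≤ (#(neighbors F v)).choose 2 + (if #(neighbors F v) = 3 then 1 else 0) +
      r.choose 2 + r * (#(neighbors F v) / 2) := by
  have hsized := (Set.sized_powersetCard V 3).mono (coe_subset.mpr hF)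
  set N := neighbors F v
  have hvN : v ∉ N := notMem_neighbors_self v
  have hNV : insert v N ⊆ V := insert_subset hvV (neighbors_subset hF)
  have hR : #(V \ insert v N) = r := by
    rw [card_sdiff_of_subset hNV, card_insert_of_notMem hvN]; omega
  have hcover : F ⊆ {e ∈ F | e ⊆ insert v N} ∪ {e ∈ F | e ⊆ V \ insert v N} ∪
      (V \ insert v N).biUnion fun t ↦ {e ∈ F | t ∈ e ∧ ¬ Disjoint e N} := by
    intro e he
    have heV := (mem_powersetCard.mp (hF he)).1
    simp only [mem_union, mem_filter, mem_biUnion]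
    by_cases hve : v ∈ e
    · exact .inl (.inl ⟨he, subset_insert_neighbors he hve⟩)
    by_cases heN : Disjoint e N
    · exact .inl (.inr ⟨he, subset_sdiff.mpr ⟨heV, disjoint_insert_right.mpr ⟨hve, heN⟩⟩⟩)
    by_cases hsub : e ⊆ insert v N
    · exact .inl (.inl ⟨he, hsub⟩)
    obtain ⟨t, hte, htN⟩ := not_subset.mp hsub
    exact .inr ⟨t, mem_sdiff.mpr ⟨heV hte, htN⟩, he, hte, heN⟩
  have hrest : #{e ∈ F | e ⊆ V \ insert v N} ≤ r.choose 2 := by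
    rw [← hR]
    refine (hC.mono (filter_subset _ _)).card_le_choose_two fun e he ↦ ?_
    obtain ⟨heF, heR⟩ := mem_filter.mp he
    exact mem_powersetCard.mpr ⟨heR, hsized heF⟩
  have hcross : #((V \ insert v N).biUnion fun t ↦ {e ∈ F | t ∈ e ∧ ¬ Disjoint e N}) ≤
      r * (#N / 2) := by
    rw [← hR]
    refine card_biUnion_le_card_mul _ _ _ fun t ht ↦ ?_
    have : 2 * #{e ∈ F | t ∈ e ∧ ¬ Disjoint e N} ≤ #N :=
      hv.two_mul_card_filter_le hsized (mem_sdiff.mp ht).2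
    omega
  calc #F ≤ _ := card_le_card hcover
    _ ≤ _ := (card_union_le _ _).trans (add_le_add (card_union_le _ _) le_rfl)
    _ ≤ _ := by gcongr; exact hv.card_filter_subset_le hC hsized

theorem IsSealed.card_le_choose (hv : IsSealed F v) (hC : LooseTriangleFree F)
    (hF : F ⊆ V.powersetCard 3) (hvV : v ∈ V) :
    #F ≤ (#V - 1).choose 2 + if #(neighbors F v) = 3 then 1 else 0 := by
  obtain ⟨r, hr⟩ := Nat.exists_eq_add_of_le (card_neighbors_lt hF hvV)
  have hV : #V - 1 = #(neighbors F v) + r := by omega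
  have hdiv : r * (#(neighbors F v) / 2) ≤ #(neighbors F v) * r := by
    rw [mul_comm]; gcongr; exact Nat.div_le_self _ _
  have := hv.card_le hC hF hvV hr
  rw [hV, add_choose_two]
  omega

theorem card_filter_pair_subset_le {p : Finset α} (hF : F ⊆ V.powersetCard 3) (hp : #p = 2) :
    #{f ∈ F | p ⊆ f} ≤ #V - 2 := by
  obtain h | ⟨e, he⟩ := {f ∈ F | p ⊆ f}.eq_empty_or_nonempty
  · simp [h]
  have hpV : p ⊆ V := by
    obtain ⟨heF, hpe⟩ := mem_filter.mp he
    exact hpe.trans (mem_powersetCard.mp (hF heF)).1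
  calc #{f ∈ F | p ⊆ f} ≤ #((V \ p).powersetCard 1) := by
        refine card_le_card_of_injOn (· \ p) (fun f hf ↦ ?_) fun f hf g hg hfg ↦ ?_
        · obtain ⟨hfF, hpf⟩ := mem_filter.mp hf
          obtain ⟨hfV, hfc⟩ := mem_powersetCard.mp (hF hfF)
          rw [mem_coe, mem_powersetCard, card_sdiff_of_subset hpf, hfc, hp]
          exact ⟨sdiff_subset_sdiff hfV le_rfl, rfl⟩
        · rw [← sdiff_union_of_subset (mem_filter.mp hf).2,
            ← sdiff_union_of_subset (mem_filter.mp hg).2]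
          exact congrArg (· ∪ p) hfg
    _ = #V - 2 := by rw [card_powersetCard, Nat.choose_one_right, card_sdiff_of_subset hpV, hp]

theorem IsSealed.card_filter_not_disjoint_erase_le {e g : Finset α} (hv : IsSealed F v)
    (hF : F ⊆ V.powersetCard 3) (he : e ∈ F) (hve : v ∈ e) (hg : g ∈ F) (hvg : v ∉ g)
    (heg : e.erase v ⊆ g) : #{f ∈ F | ¬ Disjoint f (e.erase v)} ≤ max (#V - 2) 4 := by
  have hsized := (Set.sized_powersetCard V 3).mono (coe_subset.mpr hF)
  by_cases hgN : g ⊆ neighbors F v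
  · refine le_max_of_le_right (le_trans (card_le_card fun f hf ↦ ?_)
      (hv.card_filter_not_disjoint_le_four hsized hg hgN))
    obtain ⟨hfF, hfe⟩ := mem_filter.mp hf
    exact mem_filter.mpr ⟨hfF, fun h ↦ hfe (h.mono_right heg)⟩
  have hp : #(e.erase v) = 2 := by rw [card_erase_of_mem hve, hsized he]
  refine le_max_of_le_left (le_trans (card_le_card fun f hf ↦ ?_)
    (card_filter_pair_subset_le hF hp))
  obtain ⟨hfF, hfe⟩ := mem_filter.mp hf
  refine mem_filter.mpr ⟨hfF, ?_⟩
  by_cases hvf : v ∈ f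
  · by_contra hef
    have hfg : f.erase v ⊆ g := hv.erase_subset hsized hfF hg hvf hvg
      fun h ↦ hfe (h.mono_right heg)
    obtain ⟨c, hce, hcf⟩ := not_subset.mp hef
    have hunion : e.erase v ∪ f.erase v = g := by
      refine eq_of_subset_of_card_le (union_subset heg hfg) ?_
      have hlt : #(f.erase v) < #(e.erase v ∪ f.erase v) :=
        card_lt_card ⟨subset_union_right, fun h ↦
          hcf (mem_of_mem_erase (h (mem_union_left _ hce)))⟩
      rw [card_erase_of_mem hvf, hsized hfF] at hlt
      rw [hsized hg]
      exact hlt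
    refine hgN (hunion ▸ union_subset ?_ ?_)
    · exact subset_insert_iff.mp (subset_insert_neighbors he hve)
    · exact subset_insert_iff.mp (subset_insert_neighbors hfF hvf)
  · refine hv.erase_subset hsized he hfF hve hvf fun h ↦ hfe ?_
    exact h.symm.mono_right (Finset.erase_subset v e)

end Sealed

/-! ### Triple systems with large intersections -/

theorem subset_union_of_two_le_card_inter {e₀ e₁ e : Finset α} (h₀ : #e₀ = 3) (h₁ : #e₁ = 3)
    (h : #e = 3) (hne : e₀ ≠ e₁) (hee₀ : 2 ≤ #(e ∩ e₀)) (hee₁ : 2 ≤ #(e ∩ e₁))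
    (hnot : ¬ e₀ ∩ e₁ ⊆ e) : e ⊆ e₀ ∪ e₁ := by
  obtain ⟨c, hc, hce⟩ := not_subset.mp hnot
  obtain ⟨hc₀, hc₁⟩ := mem_inter.mp hc
  have herase : ∀ f : Finset α, #f = 3 → c ∈ f → 2 ≤ #(e ∩ f) → f.erase c ⊆ e := by
    intro f hf hcf hef
    have hsub : e ∩ f ⊆ f.erase c := fun u hu ↦
      mem_erase.mpr ⟨fun h ↦ hce (h ▸ (mem_inter.mp hu).1), (mem_inter.mp hu).2⟩
    rw [← eq_of_subset_of_card_le hsub (by rwa [card_erase_of_mem hcf, hf])]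
    exact inter_subset_left
  have hsub : (e₀ ∪ e₁).erase c ⊆ e := by
    rw [erase_union_distrib]
    exact union_subset (herase e₀ h₀ hc₀ hee₀) (herase e₁ h₁ hc₁ hee₁)
  have hlt : #e₀ < #(e₀ ∪ e₁) := card_lt_card (subset_union_left.ssubset_of_ne fun heq ↦
    hne (eq_of_subset_of_card_le (union_eq_left.mp heq.symm) (by omega)).symm)
  rw [← eq_of_subset_of_card_le hsub (by rw [card_erase_of_mem (mem_union_left _ hc₀)]; omega)]
  exact erase_subset c _

theorem card_inter_lt_of_card_eq {k : ℕ} {e f : Finset α} (he : #e = k) (hf : #f = k)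
    (hne : e ≠ f) : #(e ∩ f) < k := by
  rw [← he]
  refine card_lt_card (inter_subset_left.ssubset_of_ne fun h ↦ hne ?_)
  exact eq_of_subset_of_card_le (inter_eq_left.mp h) (by omega)

theorem inter_subset_or_subset_union_of_two_le_card_inter {D : Finset (Finset α)}
    {e₀ e₁ : Finset α} (hD : (D : Set (Finset α)).Sized 3)
    (hinter : ∀ e ∈ D, ∀ f ∈ D, 2 ≤ #(e ∩ f)) (he₀ : e₀ ∈ D) (he₁ : e₁ ∈ D) (hne : e₀ ≠ e₁) :
    (∀ e ∈ D, e₀ ∩ e₁ ⊆ e) ∨ ∀ e ∈ D, e ⊆ e₀ ∪ e₁ := by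
  have hunion : ∀ f ∈ D, e₀ ≠ f → ∀ e ∈ D, ¬ e₀ ∩ f ⊆ e → e ⊆ e₀ ∪ f := fun f hf hne e he ↦
    subset_union_of_two_le_card_inter (hD he₀) (hD hf) (hD he) hne
      (hinter e he e₀ he₀) (hinter e he f hf)
  refine or_iff_not_imp_left.mpr fun hstar e he ↦ ?_
  push Not at hstar
  obtain ⟨e₂, he₂, hnot⟩ := hstar
  have hne₂ : e₀ ≠ e₂ := by rintro rfl; exact hnot inter_subset_left
  have h₂ : e₀ ∪ e₂ ⊆ e₀ ∪ e₁ := union_subset subset_union_left (hunion e₁ he₁ hne e₂ he₂ hnot)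
  by_cases hpe : e₀ ∩ e₁ ⊆ e
  swap
  · exact hunion e₁ he₁ hne e he hpe
  by_cases hqe : e₀ ∩ e₂ ⊆ e
  swap
  · exact (hunion e₂ he₂ hne₂ e he hqe).trans h₂
  have hlt : #(e₀ ∩ e₁) < #(e₀ ∩ e₁ ∪ e₀ ∩ e₂) := by
    refine card_lt_card (subset_union_left.ssubset_of_ne fun h ↦ hnot ?_)
    have heq : e₀ ∩ e₂ = e₀ ∩ e₁ := eq_of_subset_of_card_le (union_eq_left.mp h.symm)
      ((Nat.le_of_lt_succ (card_inter_lt_of_card_eq (hD he₀) (hD he₁) hne)).trans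
        (hinter e₀ he₀ e₂ he₂))
    exact heq ▸ inter_subset_right
  have he₀e : e₀ ∩ e₁ ∪ e₀ ∩ e₂ = e₀ :=
    eq_of_subset_of_card_le (union_subset inter_subset_left inter_subset_left)
      (by rw [hD he₀]; exact (hinter e₀ he₀ e₁ he₁).trans_lt hlt)
  have : e₀ = e := eq_of_subset_of_card_le (he₀e ▸ union_subset hpe hqe) (by rw [hD he, hD he₀])
  exact this ▸ subset_union_left

theorem card_le_card_biUnion_of_two_le_card_inter {D : Finset (Finset α)}
    (hD : (D : Set (Finset α)).Sized 3) (hinter : ∀ e ∈ D, ∀ f ∈ D, 2 ≤ #(e ∩ f)) :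
    #D ≤ #(D.biUnion id) := by
  have hDY : D ⊆ (D.biUnion id).powersetCard 3 := fun e he ↦
    mem_powersetCard.mpr ⟨subset_biUnion_of_mem id he, hD he⟩
  obtain h₁ | h₁ := le_or_gt #D 1
  · obtain rfl | ⟨e, he⟩ := D.eq_empty_or_nonempty
    · simp
    · have := card_le_card (mem_powersetCard.mp (hDY he)).1
      rw [hD he] at this
      omega
  obtain ⟨e₀, he₀, e₁, he₁, hne⟩ := one_lt_card.mp h₁
  have hp : #(e₀ ∩ e₁) = 2 := le_antisymm
    (Nat.le_of_lt_succ (card_inter_lt_of_card_eq (hD he₀) (hD he₁) hne)) (hinter e₀ he₀ e₁ he₁)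
  obtain hstar | hclique :=
    inter_subset_or_subset_union_of_two_le_card_inter hD hinter he₀ he₁ hne
  · have := card_filter_pair_subset_le hDY hp
    rw [filter_true_of_mem hstar] at this
    omega
  have hcard : #(e₀ ∪ e₁) = 4 := by
    have := card_union_add_card_inter e₀ e₁
    rw [hp, hD he₀, hD he₁] at this
    omega
  calc #D ≤ #((e₀ ∪ e₁).powersetCard 3) :=
        card_le_card fun e he ↦ mem_powersetCard.mpr ⟨hclique e he, hD he⟩
    _ = #(e₀ ∪ e₁) := by rw [card_powersetCard, hcard]; rfl
    _ ≤ #(D.biUnion id) := card_le_card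
        (union_subset (mem_powersetCard.mp (hDY he₀)).1 (mem_powersetCard.mp (hDY he₁)).1)

theorem IsSealed.two_le_card_inter {e f : Finset α} {v : α} (hv : IsSealed F v) (he : e ∈ F)
    (hf : f ∈ F) (hef : ¬ Disjoint e f) (hvef : ¬ (v ∈ e ↔ v ∈ f)) : 2 ≤ #(e ∩ f) := by
  have hpos : 0 < #(e ∩ f) := card_pos.mpr (not_disjoint_iff_nonempty_inter.mp hef)
  by_cases hve : v ∈ e
  · have := hv he hf hve (by tauto)
    omega
  · have := hv hf he (by tauto) hve
    rw [inter_comm] at this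
    omega

section SealedPair

variable {e₀ : Finset α} {w y : α}

theorem two_le_card_inter_of_sealed_pair {e : Finset α} (hw : IsSealed F w) (hy : IsSealed F y)
    (hwy : w ≠ y) (he₀ : e₀ ∈ F) (hwe₀ : w ∈ e₀) (hye₀ : y ∈ e₀) (he : e ∈ F)
    (hee₀ : ¬ Disjoint e e₀) : 2 ≤ #(e ∩ e₀) := by
  by_cases hwe : w ∈ e
  · by_cases hye : y ∈ e
    · exact one_lt_card.mpr ⟨w, mem_inter.mpr ⟨hwe, hwe₀⟩, y, mem_inter.mpr ⟨hye, hye₀⟩, hwy⟩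
    · exact hy.two_le_card_inter he he₀ hee₀ (by tauto)
  · exact hw.two_le_card_inter he he₀ hee₀ (by tauto)

theorem card_filter_not_disjoint_le_of_sealed_pair (hF : (F : Set (Finset α)).Sized 3)
    (hw : IsSealed F w) (hy : IsSealed F y) (hwy : w ≠ y) (he₀ : e₀ ∈ F) (hwe₀ : w ∈ e₀)
    (hye₀ : y ∈ e₀) :
    #{e ∈ F | ¬ Disjoint e e₀} ≤ #({e ∈ F | ¬ Disjoint e e₀}.biUnion id) := by
  refine card_le_card_biUnion_of_two_le_card_inter
    (hF.mono (coe_subset.mpr (filter_subset _ _))) fun e he f hf ↦ ?_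
  obtain ⟨he, hee₀⟩ := mem_filter.mp he
  obtain ⟨hf, hfe₀⟩ := mem_filter.mp hf
  have hef : ¬ Disjoint e f := by
    have he2 := two_le_card_inter_of_sealed_pair hw hy hwy he₀ hwe₀ hye₀ he hee₀
    have hf2 := two_le_card_inter_of_sealed_pair hw hy hwy he₀ hwe₀ hye₀ hf hfe₀
    obtain ⟨u, hu⟩ := inter_nonempty_of_card_lt_card_add_card (s := e₀) (t := e ∩ e₀)
      (u := f ∩ e₀) inter_subset_right inter_subset_right (by rw [hF he₀]; omega)
    simp only [mem_inter] at hu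
    exact not_disjoint_iff.mpr ⟨u, hu.1.1, hu.2.1⟩
  have hmiss : ∀ v, IsSealed F v → v ∈ e₀ → v ∉ e → v ∉ f → 2 ≤ #(e ∩ f) := by
    intro v hv hve₀ hve hvf
    calc 2 = #(e₀.erase v) := by rw [card_erase_of_mem hve₀, hF he₀]
      _ ≤ #(e ∩ f) := card_le_card (subset_inter
          (hv.erase_subset hF he₀ he hve₀ hve fun h ↦ hee₀ h.symm)
          (hv.erase_subset hF he₀ hf hve₀ hvf fun h ↦ hfe₀ h.symm))
  by_cases hwef : w ∈ e ↔ w ∈ f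
  · by_cases hyef : y ∈ e ↔ y ∈ f
    · by_cases hwe : w ∈ e
      · by_cases hye : y ∈ e
        · exact one_lt_card.mpr ⟨w, mem_inter.mpr ⟨hwe, hwef.mp hwe⟩, y,
            mem_inter.mpr ⟨hye, hyef.mp hye⟩, hwy⟩
        · exact hmiss y hy hye₀ hye (by tauto)
      · exact hmiss w hw hwe₀ hwe (by tauto)
    · exact hy.two_le_card_inter he hf hef hyef
  · exact hw.two_le_card_inter he hf hef hwef

end SealedPair

/-! ### Sets of sealed vertices -/

section SealedSets

variable {S T : Finset α}

theorem card_add_card_add_card_le_of_adjacent {e₀ : Finset α} {w y : α}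
    (hC : LooseTriangleFree F) (hF : F ⊆ V.powersetCard 3) (hS : S ⊆ V) (hT : T ⊆ V)
    (hST : ∀ v ∈ S, ∀ v' ∈ T, ∀ e ∈ F, v ∈ e → v' ∈ e → v = v') (hw : IsSealed F w)
    (hy : IsSealed F y) (hwS : w ∈ S) (hyS : y ∈ S) (hwy : w ≠ y) (he₀ : e₀ ∈ F) (hwe₀ : w ∈ e₀)
    (hye₀ : y ∈ e₀) : #F + #S + #T ≤ (#V - 1).choose 2 + 5 := by
  have hsized := (Set.sized_powersetCard V 3).mono (coe_subset.mpr hF)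
  set Y := {e ∈ F | ¬ Disjoint e e₀}.biUnion id
  have hYV : Y ⊆ V := biUnion_subset.mpr fun e he ↦
    (mem_powersetCard.mp (hF (mem_filter.mp he).1)).1
  have hwT : w ∉ T := fun h ↦ hwy (hST y hyS w h e₀ he₀ hye₀ hwe₀).symm
  have hyT : y ∉ T := fun h ↦ hwy (hST w hwS y h e₀ he₀ hwe₀ hye₀)
  have hTY : Disjoint T Y := by
    refine disjoint_left.mpr fun t ht htY ↦ ?_
    obtain ⟨e, he, hte⟩ := mem_biUnion.mp htY
    obtain ⟨heF, hee₀⟩ := mem_filter.mp he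
    have hwye : w ∈ e ∨ y ∈ e := or_iff_not_imp_left.mpr fun hwe ↦
      hw.erase_subset hsized he₀ heF hwe₀ hwe (fun h ↦ hee₀ h.symm) (mem_erase.mpr ⟨hwy.symm, hye₀⟩)
    obtain hwe | hye := hwye
    · exact hwT (hST w hwS t ht e heF hwe hte ▸ ht)
    · exact hyT (hST y hyS t ht e heF hye hte ▸ ht)
  have hTcard : #T + #Y ≤ #V := by
    rw [← card_union_of_disjoint hTY]
    exact card_le_card (union_subset hT hYV)
  have hSV : #S ≤ #V := card_le_card hS
  have hmeet : #{e ∈ F | ¬ Disjoint e e₀} ≤ #Y :=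
    card_filter_not_disjoint_le_of_sealed_pair hsized hw hy hwy he₀ hwe₀ hye₀
  obtain ⟨he₀V, he₀3⟩ := mem_powersetCard.mp (hF he₀)
  have h3V : 3 ≤ #V := he₀3 ▸ card_le_card he₀V
  have hrest : #{e ∈ F | Disjoint e e₀} ≤ (#V - 3).choose 2 := by
    rw [← he₀3, ← card_sdiff_of_subset he₀V]
    exact hC.card_filter_disjoint_le hF e₀
  have hsplit := card_filter_add_card_filter_not (s := F) (fun e ↦ Disjoint e e₀)
  have harith : (#V - 1).choose 2 = (#V - 3).choose 2 + 1 + (#V - 3) * 2 := by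
    rw [show #V - 1 = #V - 3 + 2 by omega, add_choose_two, Nat.choose_self]
  omega

theorem card_add_two_mul_card_le_of_three_le {v : α} (hC : LooseTriangleFree F)
    (hF : F ⊆ V.powersetCard 3) (hS : S ⊆ V) (hv : IsSealed F v) (hvV : v ∈ V)
    (hvS : Disjoint S (neighbors F v)) (h3 : 3 ≤ #(neighbors F v)) :
    #F + 2 * #S ≤ (#V - 1).choose 2 + 5 := by
  obtain ⟨r, hr⟩ := Nat.exists_eq_add_of_le (card_neighbors_lt hF hvV)
  have hScard : #S + #(neighbors F v) ≤ #V := by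
    rw [← card_union_of_disjoint hvS]
    exact card_le_card (union_subset hS (neighbors_subset hF))
  have hFcard := hv.card_le hC hF hvV hr
  rw [show #V - 1 = #(neighbors F v) + r by omega, add_choose_two]
  generalize #(neighbors F v) = d at *
  have hhalf : r * (d / 2) + 2 * r ≤ d * r := by
    calc r * (d / 2) + 2 * r = (d / 2 + 2) * r := by ring
      _ ≤ d * r := Nat.mul_le_mul_right r (by omega)
  split_ifs at hFcard <;> omega

theorem card_filter_mem_le_one {v : α} (hF : (F : Set (Finset α)).Sized 3)
    (hv : #(neighbors F v) ≤ 2) : #{e ∈ F | v ∈ e} ≤ 1 := by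
  calc #{e ∈ F | v ∈ e} ≤ (#(neighbors F v)).choose 2 := by
        refine card_filter_mem_subset_le (v := v) (hF.mono (coe_subset.mpr (filter_subset _ _)))
          fun e he ↦ ?_
        obtain ⟨heF, hve⟩ := mem_filter.mp he
        exact ⟨hve, subset_insert_neighbors heF hve⟩
    _ ≤ 1 := (Nat.choose_le_choose 2 hv).trans_eq (Nat.choose_self 2)

theorem card_add_two_mul_card_le_of_le_two (hC : LooseTriangleFree F)
    (hF : F ⊆ V.powersetCard 3) (hS : S ⊆ V) (hne : S.Nonempty)
    (hindep : ∀ e ∈ F, ∀ v ∈ S, ∀ v' ∈ S, v ∈ e → v' ∈ e → v = v')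
    (hdeg : ∀ v ∈ S, #(neighbors F v) ≤ 2) : #F + 2 * #S ≤ (#V - 1).choose 2 + 5 := by
  have hsized := (Set.sized_powersetCard V 3).mono (coe_subset.mpr hF)
  have hm : #(V \ S) + #S = #V := card_sdiff_add_card_eq_card hS
  have havoid : #{e ∈ F | Disjoint e S} ≤ (#(V \ S)).choose 2 := hC.card_filter_disjoint_le hF S
  have hmeet : #{e ∈ F | ¬ Disjoint e S} ≤ #S := by
    have hsub : {e ∈ F | ¬ Disjoint e S} ⊆ S.biUnion fun v ↦ {e ∈ F | v ∈ e} := by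
      intro e he
      obtain ⟨heF, heS⟩ := mem_filter.mp he
      obtain ⟨v, hve, hvS⟩ := not_disjoint_iff.mp heS
      exact mem_biUnion.mpr ⟨v, hvS, mem_filter.mpr ⟨heF, hve⟩⟩
    simpa using (card_le_card hsub).trans
      (card_biUnion_le_card_mul _ _ 1 fun v hv ↦ card_filter_mem_le_one hsized (hdeg v hv))
  have hsplit := card_filter_add_card_filter_not (s := F) (fun e ↦ Disjoint e S)
  obtain ⟨k, hk⟩ := Nat.exists_eq_add_of_lt (card_pos.mpr hne)
  rw [zero_add] at hk
  have harith : (#V - 1).choose 2 = (#(V \ S)).choose 2 + k.choose 2 + #(V \ S) * k := by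
    rw [show #V - 1 = #(V \ S) + k by omega, add_choose_two]
  have hk2 := two_mul_le_choose_two_add_three k
  obtain hempty | ⟨e, he⟩ := {e ∈ F | ¬ Disjoint e S}.eq_empty_or_nonempty
  · rw [hempty, card_empty] at hsplit
    omega
  · have h2 : 2 ≤ #(V \ S) := by
      obtain ⟨heF, heS⟩ := mem_filter.mp he
      obtain ⟨v, hve, hvS⟩ := not_disjoint_iff.mp heS
      calc 2 = #(e.erase v) := by rw [card_erase_of_mem hve, hsized heF]
        _ ≤ #(V \ S) := card_le_card fun u hu ↦ by
            obtain ⟨huv, hue⟩ := mem_erase.mp hu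
            exact mem_sdiff.mpr ⟨(mem_powersetCard.mp (hF heF)).1 hue, fun huS ↦
              huv (hindep e heF u huS v hvS hue hve)⟩
    have := Nat.mul_le_mul_right k h2
    omega

theorem card_add_card_add_card_le_of_sealed (hC : LooseTriangleFree F)
    (hF : F ⊆ V.powersetCard 3) (hS : S ⊆ V) (hT : T ⊆ V) (hne : (S ∪ T).Nonempty)
    (hsealed : ∀ v ∈ S ∪ T, IsSealed F v)
    (hST : ∀ v ∈ S, ∀ v' ∈ T, ∀ e ∈ F, v ∈ e → v' ∈ e → v = v') :
    #F + #S + #T ≤ (#V - 1).choose 2 + 5 := by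
  by_cases hindep : ∀ e ∈ F, ∀ v ∈ S ∪ T, ∀ v' ∈ S ∪ T, v ∈ e → v' ∈ e → v = v'
  · have hle : #F + 2 * #(S ∪ T) ≤ (#V - 1).choose 2 + 5 := by
      by_cases hdeg : ∀ v ∈ S ∪ T, #(neighbors F v) ≤ 2
      · exact card_add_two_mul_card_le_of_le_two hC hF (union_subset hS hT) hne hindep hdeg
      · push Not at hdeg
        obtain ⟨v, hv, h3⟩ := hdeg
        refine card_add_two_mul_card_le_of_three_le hC hF (union_subset hS hT) (hsealed v hv)
          (union_subset hS hT hv) (disjoint_left.mpr fun u hu huv ↦ ?_) h3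
        obtain ⟨hne, e, he, hve, hue⟩ := mem_neighbors.mp huv
        exact hne (hindep e he u hu v hv hue hve)
    have hScard : #S ≤ #(S ∪ T) := card_le_card subset_union_left
    have hTcard : #T ≤ #(S ∪ T) := card_le_card subset_union_right
    omega
  · push Not at hindep
    obtain ⟨e, he, v, hv, v', hv', hve, hve', hne⟩ := hindep
    by_cases hvS : v ∈ S
    · have hv'S : v' ∈ S := (mem_union.mp hv').resolve_right fun h ↦
        hne (hST v hvS v' h e he hve hve')
      exact card_add_card_add_card_le_of_adjacent hC hF hS hT hST (hsealed v hv) (hsealed v' hv')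
        hvS hv'S hne he hve hve'
    · have hvT : v ∈ T := (mem_union.mp hv).resolve_left hvS
      have hv'T : v' ∈ T := (mem_union.mp hv').resolve_left fun h ↦
        hne (hST v' h v hvT e he hve' hve).symm
      rw [add_right_comm]
      exact card_add_card_add_card_le_of_adjacent hC hF hT hS
        (fun t ht s hs e he hte hse ↦ (hST s hs t ht e he hse hte).symm)
        (hsealed v hv) (hsealed v' hv') hvT hv'T hne he hve hve'

end SealedSets

/-! ### The edges around two adjacent edges -/

theorem LoosePathFree.isSealed_filter_subset {h : Finset α} {v : α} (hE : LoosePathFree E)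
    (hh : h ∈ E) (hhV : h ∩ V = {v}) : IsSealed {e ∈ E | e ⊆ V} v := by
  intro e he f hf hve hvf hef
  obtain ⟨heE, heV⟩ := mem_filter.mp he
  obtain ⟨hfE, hfV⟩ := mem_filter.mp hf
  have hvh : v ∈ h := (mem_inter.mp (hhV.superset (mem_singleton_self v))).1
  have hhe : h ∩ e = {v} := ((inter_subset_inter_left heV).trans_eq hhV).antisymm
    (singleton_subset_iff.mpr (mem_inter.mpr ⟨hvh, hve⟩))
  refine hE hh heE hfE (card_eq_one.mpr ⟨v, hhe⟩) hef (disjoint_left.mpr fun u huh huf ↦ hvf ?_)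
  have huv : u ∈ ({v} : Finset α) := hhV.subset (mem_inter.mpr ⟨huh, hfV huf⟩)
  exact mem_singleton.mp huv ▸ huf

/-- The situation of the Setup: `P` and `Q` are edges sharing only the vertex `x`, and `B`, the
paper's `W₁`, is the union of all edges disjoint from `P ∪ Q`. The remaining vertices, including
those of `P ∪ Q`, form `A`. -/
structure IsSplit (E : Finset (Finset α)) (P Q A B : Finset α) (x : α) : Prop where
  pathFree : LoosePathFree E
  triangleFree : LooseTriangleFree E
  subset_powersetCard : E ⊆ (A ∪ B).powersetCard 3
  left_mem : P ∈ E
  right_mem : Q ∈ E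
  inter_eq : P ∩ Q = {x}
  left_subset : P ⊆ A
  right_subset : Q ⊆ A
  disjoint : Disjoint A B
  exists_edge : ∀ w ∈ B, ∃ g ∈ E, w ∈ g ∧ g ⊆ B
  subset_of_disjoint : ∀ e ∈ E, Disjoint e (P ∪ Q) → e ⊆ B

/-- The vertices of `V` completing the pair `p` to an edge. -/
def completions (E : Finset (Finset α)) (p V : Finset α) : Finset α := {w ∈ V | insert w p ∈ E}

namespace IsSplit

variable {P Q A B : Finset α} {x : α}

theorem swap (h : IsSplit E P Q A B x) : IsSplit E Q P A B x where
  __ := h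
  left_mem := h.right_mem
  right_mem := h.left_mem
  inter_eq := inter_comm P Q ▸ h.inter_eq
  left_subset := h.right_subset
  right_subset := h.left_subset
  subset_of_disjoint := union_comm P Q ▸ h.subset_of_disjoint

theorem sized (h : IsSplit E P Q A B x) : (E : Set (Finset α)).Sized 3 :=
  (Set.sized_powersetCard _ 3).mono (coe_subset.mpr h.subset_powersetCard)

theorem filter_subset_powersetCard (h : IsSplit E P Q A B x) :
    {e ∈ E | e ⊆ V} ⊆ V.powersetCard 3 := fun _ he ↦
  mem_powersetCard.mpr ⟨(mem_filter.mp he).2, h.sized (mem_filter.mp he).1⟩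

theorem mem_left (h : IsSplit E P Q A B x) : x ∈ P :=
  (mem_inter.mp (h.inter_eq.superset (mem_singleton_self x))).1

theorem notMem_right (h : IsSplit E P Q A B x) : x ∉ B :=
  disjoint_left.mp h.disjoint (h.left_subset h.mem_left)

theorem disjoint_left_right (h : IsSplit E P Q A B x) : Disjoint P B :=
  h.disjoint.mono_left h.left_subset

theorem card_erase (h : IsSplit E P Q A B x) : #(P.erase x) = 2 := by
  rw [card_erase_of_mem h.mem_left, h.sized h.left_mem]

theorem erase_disjoint_insert (h : IsSplit E P Q A B x) : Disjoint (P.erase x) (insert x B) :=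
  disjoint_insert_right.mpr ⟨notMem_erase x P, h.disjoint_left_right.mono_left (erase_subset x P)⟩

theorem erase_disjoint_right (h : IsSplit E P Q A B x) : Disjoint (P.erase x) Q := by
  refine disjoint_left.mpr fun u hu huQ ↦ ?_
  obtain ⟨hux, huP⟩ := mem_erase.mp hu
  exact hux (mem_singleton.mp (h.inter_eq.subset (mem_inter.mpr ⟨huP, huQ⟩)))

theorem mem_completions (h : IsSplit E P Q A B x) :
    x ∈ completions E (P.erase x) (insert x B) := by
  refine mem_filter.mpr ⟨mem_insert_self x B, ?_⟩
  rw [insert_erase h.mem_left]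
  exact h.left_mem

theorem subset_insert_of_card_inter_eq_one (h : IsSplit E P Q A B x) {f : Finset α} {w : α}
    (hf : f ∈ E) (hw : w ∈ B) (hwf : w ∈ f) (hPf : #(P ∩ f) = 1) : f ⊆ insert x B := by
  obtain ⟨g, hg, hwg, hgB⟩ := h.exists_edge w hw
  obtain ⟨u, hu⟩ := card_eq_one.mp hPf
  have huPf : u ∈ P ∩ f := hu.superset (mem_singleton_self u)
  have hPg : Disjoint P g := h.disjoint_left_right.mono_right hgB
  have hfg : 2 ≤ #(f ∩ g) := by
    have hpos : 0 < #(f ∩ g) := card_pos.mpr ⟨w, mem_inter.mpr ⟨hwf, hwg⟩⟩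
    have hne : #(f ∩ g) ≠ 1 := fun h₁ ↦ h.pathFree h.left_mem hf hg hPf h₁ hPg
    omega
  have hug : u ∉ f ∩ g := fun hu' ↦
    disjoint_left.mp hPg (mem_inter.mp huPf).1 (mem_inter.mp hu').2
  have hfu : insert u (f ∩ g) = f :=
    eq_of_subset_of_card_le (insert_subset (mem_inter.mp huPf).2 inter_subset_left)
      (by rw [card_insert_of_notMem hug, h.sized hf]; omega)
  have hfuB : f ⊆ insert u B :=
    hfu.superset.trans (insert_subset_insert u (inter_subset_right.trans hgB))
  obtain rfl | hux := eq_or_ne u x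
  · exact hfuB
  have hQf : Disjoint Q f := by
    refine disjoint_of_subset_right hfuB (disjoint_insert_right.mpr ⟨fun huQ ↦ hux ?_,
      h.swap.disjoint_left_right⟩)
    exact mem_singleton.mp (h.inter_eq.subset (mem_inter.mpr ⟨(mem_inter.mp huPf).1, huQ⟩))
  exact absurd hQf (h.pathFree h.right_mem h.left_mem hf
    (card_eq_one.mpr ⟨x, h.swap.inter_eq⟩) hPf)

theorem eq_insert_or_subset_insert (h : IsSplit E P Q A B x) {f : Finset α} {w : α}
    (hf : f ∈ E) (hw : w ∈ B) (hwf : w ∈ f) (hPf : ¬ Disjoint P f) :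
    f = insert w (P.erase x) ∨ f ⊆ insert x B := by
  by_cases hPf₁ : #(P ∩ f) = 1
  · exact .inr (h.subset_insert_of_card_inter_eq_one hf hw hwf hPf₁)
  have hPf₂ : 2 ≤ #(P ∩ f) := by
    have : 0 < #(P ∩ f) := card_pos.mpr (not_disjoint_iff_nonempty_inter.mp hPf)
    omega
  have hwP : w ∉ P := fun h' ↦ disjoint_left.mp h.disjoint_left_right h' hw
  have hwPf : insert w (P ∩ f) = f :=
    eq_of_subset_of_card_le (insert_subset hwf inter_subset_right) (by
      rw [card_insert_of_notMem fun h' ↦ hwP (mem_inter.mp h').1, h.sized hf]; omega)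
  by_cases hxf : x ∈ f
  · refine .inr (h.swap.subset_insert_of_card_inter_eq_one hf hw hwf (card_eq_one.mpr ⟨x, ?_⟩))
    refine Subset.antisymm (fun u hu ↦ ?_)
      (singleton_subset_iff.mpr (mem_inter.mpr ⟨h.swap.mem_left, hxf⟩))
    obtain ⟨huQ, huf⟩ := mem_inter.mp hu
    obtain rfl | huPf := mem_insert.mp (hwPf.superset huf)
    · exact absurd hw (disjoint_left.mp h.swap.disjoint_left_right huQ)
    · exact h.inter_eq.subset (mem_inter.mpr ⟨(mem_inter.mp huPf).1, huQ⟩)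
  · left
    have hsub : P ∩ f ⊆ P.erase x := fun u hu ↦
      mem_erase.mpr ⟨fun hux ↦ hxf (hux ▸ (mem_inter.mp hu).2), (mem_inter.mp hu).1⟩
    rw [← hwPf, eq_of_subset_of_card_le hsub (h.card_erase.trans_le hPf₂)]

theorem eq_insert_or_eq_insert_or_subset (h : IsSplit E P Q A B x) {f : Finset α} {w : α}
    (hf : f ∈ E) (hw : w ∈ B) (hwf : w ∈ f) :
    f = insert w (P.erase x) ∨ f = insert w (Q.erase x) ∨ f ⊆ insert x B := by
  by_cases hPf : Disjoint P f
  · by_cases hQf : Disjoint Q f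
    · exact .inr (.inr ((h.subset_of_disjoint f hf
        (disjoint_union_right.mpr ⟨hPf.symm, hQf.symm⟩)).trans (subset_insert x B)))
    · exact .inr (h.swap.eq_insert_or_subset_insert hf hw hwf hQf)
  · exact (h.eq_insert_or_subset_insert hf hw hwf hPf).imp_right .inr

theorem isSealed_of_mem_completions (h : IsSplit E P Q A B x) {w : α}
    (hw : w ∈ completions E (P.erase x) (insert x B)) : IsSealed {e ∈ E | e ⊆ insert x B} w := by
  obtain ⟨hwB, hwE⟩ := mem_filter.mp hw
  refine h.pathFree.isSealed_filter_subset hwE ?_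
  rw [insert_inter_of_mem hwB, disjoint_iff_inter_eq_empty.mp h.erase_disjoint_insert,
    insert_empty]

theorem eq_of_mem_completions (h : IsSplit E P Q A B x) {w w' : α} {e : Finset α}
    (hw : w ∈ completions E (P.erase x) (insert x B))
    (hw' : w' ∈ completions E (Q.erase x) (insert x B)) (he : e ∈ E) (heB : e ⊆ insert x B)
    (hwe : w ∈ e) (hwe' : w' ∈ e) : w = w' := by
  by_contra hne
  obtain ⟨hwB, hwE⟩ := mem_filter.mp hw
  obtain ⟨hwB', hwE'⟩ := mem_filter.mp hw'
  have hleft : insert w (P.erase x) ∩ e = {w} := by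
    rw [insert_inter_of_mem hwe,
      disjoint_iff_inter_eq_empty.mp (h.erase_disjoint_insert.mono_right heB), insert_empty]
  have hright : e ∩ insert w' (Q.erase x) = {w'} := by
    rw [inter_comm, insert_inter_of_mem hwe',
      disjoint_iff_inter_eq_empty.mp (h.swap.erase_disjoint_insert.mono_right heB), insert_empty]
  refine h.pathFree hwE he hwE' (card_eq_one.mpr ⟨w, hleft⟩) (card_eq_one.mpr ⟨w', hright⟩) ?_
  rw [disjoint_insert_left, disjoint_insert_right, mem_insert, not_or]
  exact ⟨⟨hne, fun hwQ ↦ disjoint_left.mp h.swap.erase_disjoint_insert hwQ hwB⟩,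
    fun hwP ↦ disjoint_left.mp h.erase_disjoint_insert hwP hwB',
    h.erase_disjoint_right.mono_right (erase_subset x Q)⟩

theorem card_le_card_add_card_completions (h : IsSplit E P Q A B x) :
    #E ≤ #{e ∈ E | e ⊆ A} + #{e ∈ E | e ⊆ insert x B} + #(completions E (P.erase x) B) +
      #(completions E (Q.erase x) B) := by
  have hsub : E ⊆ {e ∈ E | e ⊆ A} ∪ {e ∈ E | e ⊆ insert x B} ∪
      (completions E (P.erase x) B).image (insert · (P.erase x)) ∪
      (completions E (Q.erase x) B).image (insert · (Q.erase x)) := by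
    intro e he
    simp only [mem_union, mem_filter, mem_image, completions]
    by_cases heA : e ⊆ A
    · exact .inl (.inl (.inl ⟨he, heA⟩))
    obtain ⟨w, hwe, hwA⟩ := not_subset.mp heA
    have hw : w ∈ B := (mem_union.mp
      ((mem_powersetCard.mp (h.subset_powersetCard he)).1 hwe)).resolve_left hwA
    obtain rfl | rfl | heB := h.eq_insert_or_eq_insert_or_subset he hw hwe
    · exact .inl (.inr ⟨w, ⟨hw, he⟩, rfl⟩)
    · exact .inr ⟨w, ⟨hw, he⟩, rfl⟩
    · exact .inl (.inl (.inr ⟨he, heB⟩))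
  calc #E ≤ _ := card_le_card hsub
    _ ≤ _ := (card_union_le _ _).trans (add_le_add ((card_union_le _ _).trans
        (add_le_add (card_union_le _ _) card_image_le)) card_image_le)

theorem triangleFree_filter (h : IsSplit E P Q A B x) (p : Finset α → Prop) [DecidablePred p] :
    LooseTriangleFree {e ∈ E | p e} :=
  h.triangleFree.mono (filter_subset _ _)

theorem completions_subset_insert (p : Finset α) :
    completions E p B ⊆ completions E p (insert x B) :=
  filter_subset_filter _ (subset_insert x B)

theorem card_right_add_card_completions_le_of_notMem (h : IsSplit E P Q A B x)
    (hx : ∀ e ∈ E, e ⊆ insert x B → x ∉ e)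
    (hne : (completions E (P.erase x) B ∪ completions E (Q.erase x) B).Nonempty) :
    #{e ∈ E | e ⊆ insert x B} + #(completions E (P.erase x) B) + #(completions E (Q.erase x) B) ≤
      (#B - 1).choose 2 + 5 := by
  refine card_add_card_add_card_le_of_sealed (h.triangleFree_filter _) (fun e he ↦ ?_)
    (filter_subset _ _) (filter_subset _ _) hne (fun v hv ↦ ?_) fun v hv v' hv' e he hve hve' ↦ ?_
  · obtain ⟨heE, heB⟩ := mem_filter.mp he
    exact mem_powersetCard.mpr ⟨(subset_insert_iff_of_notMem (hx e heE heB)).mp heB, h.sized heE⟩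
  · exact (mem_union.mp hv).elim
      (fun hv ↦ h.isSealed_of_mem_completions (completions_subset_insert _ hv))
      fun hv ↦ h.swap.isSealed_of_mem_completions (completions_subset_insert _ hv)
  · obtain ⟨heE, heB⟩ := mem_filter.mp he
    exact h.eq_of_mem_completions (completions_subset_insert _ hv)
      (completions_subset_insert _ hv') heE heB hve hve'

section Link

variable {e : Finset α}

theorem card_insert_sdiff_erase (h : IsSplit E P Q A B x) (he : e ∈ E) (heB : e ⊆ insert x B)
    (hxe : x ∈ e) : #(insert x B \ e.erase x) = #B - 1 := by
  rw [card_sdiff_of_subset ((erase_subset x e).trans heB), card_insert_of_notMem h.notMem_right,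
    card_erase_of_mem hxe, h.sized he]
  omega

theorem card_right_le_card_filter_disjoint_add (h : IsSplit E P Q A B x) (hB : 5 ≤ #B)
    (he : e ∈ E) (heB : e ⊆ insert x B) (hxe : x ∈ e) :
    #{f ∈ E | f ⊆ insert x B} ≤
      #{f ∈ {f ∈ E | f ⊆ insert x B} | Disjoint f (e.erase x)} + (#B - 1) := by
  obtain ⟨w, hw⟩ : (e.erase x).Nonempty := by
    rw [← card_pos, card_erase_of_mem hxe, h.sized he]; decide
  have hwB : w ∈ B := subset_insert_iff.mp heB hw
  obtain ⟨g, hg, hwg, hgB⟩ := h.exists_edge w hwB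
  have hxg : x ∉ g := fun hxg ↦ h.notMem_right (hgB hxg)
  have hsealed := h.isSealed_of_mem_completions h.mem_completions
  have heF : e ∈ {f ∈ E | f ⊆ insert x B} := mem_filter.mpr ⟨he, heB⟩
  have hgF : g ∈ {f ∈ E | f ⊆ insert x B} :=
    mem_filter.mpr ⟨hg, hgB.trans (subset_insert x B)⟩
  have heg : e.erase x ⊆ g :=
    hsealed.erase_subset ((Set.sized_powersetCard _ 3).mono
      (coe_subset.mpr h.filter_subset_powersetCard)) heF hgF hxe hxg
      (not_disjoint_iff.mpr ⟨w, mem_of_mem_erase hw, hwg⟩)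
  have hmeet := hsealed.card_filter_not_disjoint_erase_le h.filter_subset_powersetCard heF hxe
    hgF hxg heg
  rw [card_insert_of_notMem h.notMem_right] at hmeet
  have := card_filter_add_card_filter_not (s := {f ∈ E | f ⊆ insert x B})
    (fun f ↦ Disjoint f (e.erase x))
  omega

theorem filter_disjoint_subset_powersetCard (h : IsSplit E P Q A B x) :
    {f ∈ {f ∈ E | f ⊆ insert x B} | Disjoint f (e.erase x)} ⊆
      (insert x B \ e.erase x).powersetCard 3 := by
  intro f hf
  obtain ⟨hfF, hfe⟩ := mem_filter.mp hf
  obtain ⟨hfE, hfB⟩ := mem_filter.mp hfF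
  exact mem_powersetCard.mpr ⟨subset_sdiff.mpr ⟨hfB, hfe⟩, h.sized hfE⟩

theorem card_right_le_of_mem (h : IsSplit E P Q A B x) (hB : 5 ≤ #B)
    (he : e ∈ E) (heB : e ⊆ insert x B) (hxe : x ∈ e) :
    #{f ∈ E | f ⊆ insert x B} ≤ (#B - 1).choose 2 + 2 := by
  have hxV : x ∈ insert x B \ e.erase x :=
    mem_sdiff.mpr ⟨mem_insert_self x B, notMem_erase x e⟩
  have hrest := ((h.isSealed_of_mem_completions h.mem_completions).mono
    (filter_subset (fun f ↦ Disjoint f (e.erase x)) _)).card_le_choose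
    ((h.triangleFree_filter _).mono (filter_subset _ _)) h.filter_disjoint_subset_powersetCard hxV
  rw [h.card_insert_sdiff_erase he heB hxe] at hrest
  have hremove := h.card_right_le_card_filter_disjoint_add hB he heB hxe
  have harith := choose_two_eq_choose_two_pred_add (#B - 1)
  split_ifs at hrest <;> omega

theorem completions_insert_subset_sdiff (h : IsSplit E P Q A B x) (he : e ∈ E)
    (heB : e ⊆ insert x B) (hxe : x ∈ e) :
    completions E (P.erase x) (insert x B) ⊆ insert x B \ e.erase x := by
  refine subset_sdiff.mpr ⟨filter_subset _ _, disjoint_left.mpr fun w hw hwe ↦ ?_⟩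
  obtain ⟨hwx, hwe⟩ := mem_erase.mp hwe
  exact hwx (h.eq_of_mem_completions hw h.swap.mem_completions he heB hwe hxe)

theorem card_completions_insert (h : IsSplit E P Q A B x) :
    #(completions E (P.erase x) (insert x B)) = #(completions E (P.erase x) B) + 1 := by
  rw [completions, filter_insert, if_pos (mem_filter.mp h.mem_completions).2,
    card_insert_of_notMem fun hx ↦ h.notMem_right (mem_filter.mp hx).1, completions]

theorem card_right_add_card_completions_le_of_mem (h : IsSplit E P Q A B x) (hB : 5 ≤ #B)
    (he : e ∈ E) (heB : e ⊆ insert x B) (hxe : x ∈ e) :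
    #{f ∈ E | f ⊆ insert x B} + #(completions E (P.erase x) B) + #(completions E (Q.erase x) B) ≤
      (#B - 1).choose 2 + 4 := by
  have hrest := card_add_card_add_card_le_of_sealed
    ((h.triangleFree_filter _).mono (filter_subset (fun f ↦ Disjoint f (e.erase x)) _))
    h.filter_disjoint_subset_powersetCard (h.completions_insert_subset_sdiff he heB hxe)
    (h.swap.completions_insert_subset_sdiff he heB hxe)
    ⟨x, mem_union_left _ h.mem_completions⟩
    (fun v hv ↦ ((mem_union.mp hv).elim h.isSealed_of_mem_completions
      h.swap.isSealed_of_mem_completions).mono (filter_subset _ _))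
    fun v hv v' hv' f hf ↦ h.eq_of_mem_completions hv hv'
      (mem_filter.mp (mem_filter.mp hf).1).1 (mem_filter.mp (mem_filter.mp hf).1).2
  rw [h.card_insert_sdiff_erase he heB hxe, h.card_completions_insert,
    h.swap.card_completions_insert] at hrest
  have hremove := h.card_right_le_card_filter_disjoint_add hB he heB hxe
  have harith := choose_two_eq_choose_two_pred_add (#B - 1)
  omega

theorem card_union_erase (h : IsSplit E P Q A B x) : #(P.erase x ∪ Q.erase x) = 4 := by
  rw [card_union_of_disjoint (h.erase_disjoint_right.mono_right (erase_subset x Q)),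
    h.card_erase, h.swap.card_erase]

theorem card_left_le_of_mem (h : IsSplit E P Q A B x) (he : e ∈ E) (heB : e ⊆ insert x B)
    (hxe : x ∈ e) : #{f ∈ E | f ⊆ A} ≤ (#A - 1).choose 2 := by
  have hxA : x ∈ A := h.left_subset h.mem_left
  have heA : e ∩ A = {x} := by
    refine Subset.antisymm (fun u hu ↦ ?_) (singleton_subset_iff.mpr (mem_inter.mpr ⟨hxe, hxA⟩))
    obtain ⟨hue, huA⟩ := mem_inter.mp hu
    exact mem_singleton.mpr
      ((mem_insert.mp (heB hue)).resolve_right (disjoint_left.mp h.disjoint huA))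
  have hN : P.erase x ∪ Q.erase x ⊆ neighbors {f ∈ E | f ⊆ A} x := union_subset
    (subset_insert_iff.mp (subset_insert_neighbors (mem_filter.mpr ⟨h.left_mem, h.left_subset⟩)
      h.mem_left))
    (subset_insert_iff.mp (subset_insert_neighbors (mem_filter.mpr ⟨h.right_mem, h.right_subset⟩)
      h.swap.mem_left))
  have hd := h.card_union_erase.symm.trans_le (card_le_card hN)
  have := (h.pathFree.isSealed_filter_subset he heA).card_le_choose (h.triangleFree_filter _)
    h.filter_subset_powersetCard hxA
  rwa [if_neg (by omega), add_zero] at this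

end Link

theorem erase_subset_of_mem_completions (h : IsSplit E P Q A B x) {w : α} {f : Finset α}
    (hw : w ∈ completions E (P.erase x) B) (hf : f ∈ E) (hfA : f ⊆ A)
    (hfP : ¬ Disjoint f (P.erase x)) : P.erase x ⊆ f := by
  obtain ⟨hwB, hwE⟩ := mem_filter.mp hw
  obtain ⟨g, hg, hwg, hgB⟩ := h.exists_edge w hwB
  have hgw : g ∩ insert w (P.erase x) = {w} := by
    rw [inter_comm, insert_inter_of_mem hwg, disjoint_iff_inter_eq_empty.mp
      (h.erase_disjoint_insert.mono_right (hgB.trans (subset_insert x B))), insert_empty]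
  have hwf : insert w (P.erase x) ∩ f = P.erase x ∩ f :=
    insert_inter_of_notMem fun hwf ↦ disjoint_left.mp h.disjoint (hfA hwf) hwB
  have hne : #(P.erase x ∩ f) ≠ 1 := fun h₁ ↦
    h.pathFree hg hwE hf (card_eq_one.mpr ⟨w, hgw⟩) (hwf ▸ h₁)
      (h.disjoint.symm.mono hgB hfA)
  have hpos : 0 < #(P.erase x ∩ f) :=
    card_pos.mpr (not_disjoint_iff_nonempty_inter.mp fun h' ↦ hfP h'.symm)
  exact inter_eq_left.mp (eq_of_subset_of_card_le inter_subset_left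
    (by rw [h.card_erase]; omega))

theorem five_le_card_left (h : IsSplit E P Q A B x) : 5 ≤ #A := by
  have hsub : insert x (P.erase x ∪ Q.erase x) ⊆ A :=
    insert_subset (h.left_subset h.mem_left) (union_subset
      ((erase_subset x P).trans h.left_subset) ((erase_subset x Q).trans h.right_subset))
  refine le_trans ?_ (card_le_card hsub)
  rw [card_insert_of_notMem (by simp), h.card_union_erase]

theorem card_left_add_two_le (h : IsSplit E P Q A B x)
    (hne : (completions E (P.erase x) B).Nonempty) :
    #{f ∈ E | f ⊆ A} + 2 ≤ (#A - 1).choose 2 := by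
  obtain ⟨w, hw⟩ := hne
  have hPA : P.erase x ⊆ A := (erase_subset x P).trans h.left_subset
  have hxV : x ∈ A \ P.erase x :=
    mem_sdiff.mpr ⟨h.left_subset h.mem_left, notMem_erase x P⟩
  have hPV : P ∩ (A \ P.erase x) = {x} := by
    ext u
    have := @h.left_subset u
    simp only [mem_inter, mem_sdiff, mem_erase, mem_singleton]
    have := h.mem_left
    grind
  have hV : #(A \ P.erase x) = #A - 2 := by rw [card_sdiff_of_subset hPA, h.card_erase]
  have hmeet : #{f ∈ {f ∈ E | f ⊆ A} | ¬ Disjoint f (P.erase x)} ≤ #A - 2 := by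
    refine le_trans (card_le_card fun f hf ↦ ?_)
      (card_filter_pair_subset_le (h.filter_subset_powersetCard (V := A)) h.card_erase)
    obtain ⟨hfF, hfP⟩ := mem_filter.mp hf
    obtain ⟨hfE, hfA⟩ := mem_filter.mp hfF
    exact mem_filter.mpr ⟨hfF, h.erase_subset_of_mem_completions hw hfE hfA hfP⟩
  have havoid : {f ∈ {f ∈ E | f ⊆ A} | Disjoint f (P.erase x)} ⊆ {f ∈ E | f ⊆ A \ P.erase x} :=
    fun f hf ↦ by simpa only [mem_filter, and_assoc, subset_sdiff] using hf
  have hrest := (h.pathFree.isSealed_filter_subset h.left_mem hPV).card_le_choose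
    (h.triangleFree_filter _) h.filter_subset_powersetCard hxV
  have hd : #(neighbors {f ∈ E | f ⊆ A \ P.erase x} x) < #A - 2 :=
    hV ▸ card_neighbors_lt h.filter_subset_powersetCard hxV
  have hsplit := card_filter_add_card_filter_not (s := {f ∈ E | f ⊆ A})
    (fun f ↦ Disjoint f (P.erase x))
  have hA := h.five_le_card_left
  have harith : (#A - 1).choose 2 = (#A - 2 - 1).choose 2 + 1 + (#A - 2 - 1) * 2 := by
    rw [show #A - 1 = #A - 2 - 1 + 2 by omega, add_choose_two, Nat.choose_self]
  have := card_le_card havoid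
  rw [hV] at hrest
  split_ifs at hrest <;> omega

theorem card_le (h : IsSplit E P Q A B x) (hB : 5 ≤ #B) {f : Finset α} (hf : f ∈ E)
    (hfA : ¬ f ⊆ A) (hfB : ¬ f ⊆ B) :
    #E ≤ (#A - 1).choose 2 + (#B - 1).choose 2 + 3 := by
  have htotal := h.card_le_card_add_card_completions
  obtain hempty | hne :=
    (completions E (P.erase x) B ∪ completions E (Q.erase x) B).eq_empty_or_nonempty
  · obtain ⟨hP, hQ⟩ := union_eq_empty.mp hempty
    obtain ⟨w, hwf, hwA⟩ := not_subset.mp hfA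
    have hw : w ∈ B := (mem_union.mp
      ((mem_powersetCard.mp (h.subset_powersetCard hf)).1 hwf)).resolve_left hwA
    have hfx : f ⊆ insert x B := by
      obtain rfl | rfl | hfx := h.eq_insert_or_eq_insert_or_subset hf hw hwf
      · exact absurd (mem_filter.mpr ⟨hw, hf⟩) (hP ▸ notMem_empty w)
      · exact absurd (mem_filter.mpr ⟨hw, hf⟩) (hQ ▸ notMem_empty w)
      · exact hfx
    have hxf : x ∈ f := by_contra fun hxf ↦ hfB ((subset_insert_iff_of_notMem hxf).mp hfx)
    have hleft := h.card_left_le_of_mem hf hfx hxf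
    have hright := h.card_right_le_of_mem hB hf hfx hxf
    rw [hP, hQ, card_empty] at htotal
    omega
  · have hleft : #{f ∈ E | f ⊆ A} + 2 ≤ (#A - 1).choose 2 :=
      (union_nonempty.mp hne).elim h.card_left_add_two_le h.swap.card_left_add_two_le
    by_cases hx : ∀ e ∈ E, e ⊆ insert x B → x ∉ e
    · have := h.card_right_add_card_completions_le_of_notMem hx hne
      omega
    · push Not at hx
      obtain ⟨e, he, heB, hxe⟩ := hx
      have := h.card_right_add_card_completions_le_of_mem hB he heB hxe
      omega

end IsSplit

/-! ### The forbidden subgraphs and `W₁` -/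

theorem exists_eq_insert_pair_of_mem {e : Finset α} {c : α} (he : #e = 3) (hc : c ∈ e) :
    ∃ a b, a ≠ b ∧ a ≠ c ∧ b ≠ c ∧ e = {a, b, c} := by
  obtain ⟨a, b, hab, heab⟩ := card_eq_two.mp ((card_erase_of_mem hc).trans (by rw [he]))
  have ha : a ∈ e.erase c := by simp [heab]
  have hb : b ∈ e.erase c := by simp [heab]
  refine ⟨a, b, hab, ne_of_mem_erase ha, ne_of_mem_erase hb, ?_⟩
  rw [← insert_erase hc, heab]
  ext; grind

theorem exists_eq_insert_of_mem_of_mem {e : Finset α} {a c : α} (he : #e = 3) (ha : a ∈ e)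
    (hc : c ∈ e) (hac : a ≠ c) : ∃ b, a ≠ b ∧ b ≠ c ∧ e = {a, b, c} := by
  obtain ⟨b, b', hbb', hbc, hb'c, rfl⟩ := exists_eq_insert_pair_of_mem he hc
  simp only [mem_insert, mem_singleton, hac, or_false] at ha
  obtain rfl | rfl := ha
  · exact ⟨b', hbb', hb'c, rfl⟩
  · exact ⟨b, hbb'.symm, hbc, insert_comm _ _ _⟩

end TripleSystems

namespace ThreeGraph

variable {H : ThreeGraph}

theorem IsValid.containsCopy_of_nodup {F : ThreeGraph} (hval : H.IsValid) {l : List ℕ}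
    (hl : l.Nodup) (hF : F.verts ⊆ range l.length) (hcover : F.verts ⊆ F.edges.biUnion id)
    (hedges : ∀ e ∈ F.edges, e.image (l.getD · 0) ∈ H.edges) : H.ContainsCopy F := by
  refine ⟨(l.getD · 0), fun i hi j hj hij ↦ ?_, fun v hv ↦ ?_, hedges⟩
  · have hi := mem_range.mp (hF hi)
    have hj := mem_range.mp (hF hj)
    simp only [List.getD_eq_getElem _ _ hi, List.getD_eq_getElem _ _ hj] at hij
    exact (hl.getElem_inj_iff).mp hij
  · obtain ⟨e, he, hve⟩ := mem_biUnion.mp (hcover hv)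
    exact (hval _ (hedges e he)).2 (mem_image_of_mem _ hve)

theorem IsValid.loosePathFree (hval : H.IsValid) (hP : H.Free pathP) : LoosePathFree H.edges := by
  intro e he f hf g hg hef hfg heg
  obtain ⟨c, hc⟩ := card_eq_one.mp hef
  obtain ⟨d, hd⟩ := card_eq_one.mp hfg
  obtain ⟨hce, hcf⟩ := mem_inter.mp (hc.superset (mem_singleton_self c))
  obtain ⟨hdf, hdg⟩ := mem_inter.mp (hd.superset (mem_singleton_self d))
  have hcd : c ≠ d := fun h ↦ disjoint_left.mp heg hce (h ▸ hdg)
  obtain ⟨a, b, hab, hac, hbc, rfl⟩ := exists_eq_insert_pair_of_mem (hval e he).1 hce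
  obtain ⟨m, hcm, hmd, rfl⟩ := exists_eq_insert_of_mem_of_mem (hval f hf).1 hcf hdf hcd
  obtain ⟨y, z, hyz, hyd, hzd, rfl⟩ := exists_eq_insert_pair_of_mem (hval g hg).1 hdg
  have hnodup : [a, b, c, m, d, y, z].Nodup := by
    simp only [Finset.ext_iff, mem_inter, mem_insert, mem_singleton] at hc hd
    simp only [disjoint_left, mem_insert, mem_singleton] at heg
    grind
  rw [pair_comm z d, insert_comm y d] at hg
  exact hP (hval.containsCopy_of_nodup hnodup (by decide : pathP.verts ⊆ range 7) (by decide)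
    (by simp [pathP, he, hf, hg]))

theorem IsValid.looseTriangleFree (hval : H.IsValid) (hC : H.Free triangleC) :
    LooseTriangleFree H.edges := by
  intro e he f hf g hg hef hfg heg
  by_contra hefg
  rw [not_nonempty_iff_eq_empty] at hefg
  obtain ⟨c, hc⟩ := card_eq_one.mp hef
  obtain ⟨d, hd⟩ := card_eq_one.mp hfg
  obtain ⟨a, ha⟩ := card_eq_one.mp heg
  obtain ⟨hce, hcf⟩ := mem_inter.mp (hc.superset (mem_singleton_self c))
  obtain ⟨hdf, hdg⟩ := mem_inter.mp (hd.superset (mem_singleton_self d))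
  obtain ⟨hae, hag⟩ := mem_inter.mp (ha.superset (mem_singleton_self a))
  have hnot : ∀ v, ¬ (v ∈ e ∧ v ∈ f ∧ v ∈ g) := fun v hv ↦
    notMem_empty v (hefg.subset (by simpa only [mem_inter, and_assoc] using hv))
  have hac : a ≠ c := by rintro rfl; exact hnot a ⟨hae, hcf, hag⟩
  have hcd : c ≠ d := by rintro rfl; exact hnot c ⟨hce, hcf, hdg⟩
  have hda : d ≠ a := by rintro rfl; exact hnot d ⟨hae, hdf, hdg⟩
  obtain ⟨b, hab, hbc, rfl⟩ := exists_eq_insert_of_mem_of_mem (hval e he).1 hae hce hac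
  obtain ⟨m, hcm, hmd, rfl⟩ := exists_eq_insert_of_mem_of_mem (hval f hf).1 hcf hdf hcd
  obtain ⟨y, hdy, hya, rfl⟩ := exists_eq_insert_of_mem_of_mem (hval g hg).1 hdg hag hda
  have hnodup : [a, b, c, m, d, y].Nodup := by
    simp only [Finset.ext_iff, mem_inter, mem_insert, mem_singleton] at hc hd ha
    grind
  exact hC (hval.containsCopy_of_nodup hnodup (by decide : triangleC.verts ⊆ range 6) (by decide)
    (by simp [triangleC, he, hf, hg]))

theorem IsValid.mem_W1set (hval : H.IsValid) {U : Finset ℕ} {v : ℕ} :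
    v ∈ W1set H U ↔ ∃ e ∈ H.edges, Disjoint e U ∧ v ∈ e := by
  have hsub : ∀ e ∈ H.edges, e ⊆ Wset H U ↔ Disjoint e U := fun e he ↦ by
    rw [Wset, subset_sdiff, and_iff_right (hval e he).2]
  simp only [W1set, W0set, mem_sdiff, mem_filter, not_and]
  push Not
  constructor
  · rintro ⟨hv, h⟩
    obtain ⟨e, he, heW, hve⟩ := h hv
    exact ⟨e, he, (hsub e he).mp heW, hve⟩
  · rintro ⟨e, he, heU, hve⟩
    have heW := (hsub e he).mpr heU
    exact ⟨heW hve, fun _ ↦ ⟨e, he, heW, hve⟩⟩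

theorem IsValid.subset_W1set (hval : H.IsValid) {e U : Finset ℕ} (he : e ∈ H.edges)
    (heU : Disjoint e U) : e ⊆ W1set H U :=
  fun _ hv ↦ hval.mem_W1set.mpr ⟨e, he, heU, hv⟩

theorem disjoint_W1set (H : ThreeGraph) (U : Finset ℕ) : Disjoint U (W1set H U) :=
  disjoint_sdiff.mono_right sdiff_subset

theorem W1set_subset_verts (H : ThreeGraph) (U : Finset ℕ) : W1set H U ⊆ H.verts :=
  sdiff_subset.trans sdiff_subset

theorem IsValid.isSplit {P Q : Finset ℕ} {x : ℕ} (hval : H.IsValid) (hP : H.Free pathP)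
    (hC : H.Free triangleC) (hPE : P ∈ H.edges) (hQE : Q ∈ H.edges) (hPQ : P ∩ Q = {x}) :
    IsSplit H.edges P Q (H.verts \ W1set H (P ∪ Q)) (W1set H (P ∪ Q)) x where
  pathFree := hval.loosePathFree hP
  triangleFree := hval.looseTriangleFree hC
  subset_powersetCard e he := by
    rw [sdiff_union_of_subset (W1set_subset_verts H _)]
    exact mem_powersetCard.mpr (hval e he).symm
  left_mem := hPE
  right_mem := hQE
  inter_eq := hPQ
  left_subset := subset_sdiff.mpr
    ⟨(hval P hPE).2, (disjoint_W1set H _).mono_left subset_union_left⟩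
  right_subset := subset_sdiff.mpr
    ⟨(hval Q hQE).2, (disjoint_W1set H _).mono_left subset_union_right⟩
  disjoint := sdiff_disjoint
  exists_edge w hw := by
    obtain ⟨g, hg, hgU, hwg⟩ := hval.mem_W1set.mp hw
    exact ⟨g, hg, hwg, hval.subset_W1set hg hgU⟩
  subset_of_disjoint e he heU := hval.subset_W1set he heU

end ThreeGraph

theorem fact_W1_ge_five_general (H : ThreeGraph) (P Q : Finset ℕ) (hval : H.IsValid)
    (hP : H.Free pathP) (hC : H.Free triangleC) (hPE : P ∈ H.edges) (hQE : Q ∈ H.edges)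
    (hPQ : #(P ∩ Q) = 1) (hW1 : 5 ≤ #(W1set H (P ∪ Q))) (hH1 : (H1set H (P ∪ Q)).Nonempty) :
    #H.edges < (#H.verts - 6).choose 2 + 10 := by
  obtain ⟨x, hx⟩ := card_eq_one.mp hPQ
  obtain ⟨f, hf⟩ := hH1
  obtain ⟨hfE, ⟨u, hu⟩, ⟨w, hw⟩⟩ := mem_filter.mp hf
  obtain ⟨⟨huf, huU⟩, hwf, hwW⟩ := And.intro (mem_inter.mp hu) (mem_inter.mp hw)
  have hsplit := hval.isSplit hP hC hPE hQE hx
  have hle := hsplit.card_le hW1 hfE (fun hfA ↦ (mem_sdiff.mp (hfA hwf)).2 hwW)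
    fun hfB ↦ disjoint_left.mp (H.disjoint_W1set _) huU (hfB huf)
  rw [← card_sdiff_add_card_eq_card (H.W1set_subset_verts (P ∪ Q))]
  exact hle.trans_lt (choose_two_add_choose_two_lt hsplit.five_le_card_left hW1)

end

/-- Fact 6: in the Setup with `n ≥ 12`, if `|W₁| ≥ 5` and `H₁ ≠ ∅`, then
`|H| < binom(n-6,2) + 10`. -/
theorem fact_W1_ge_five (n : ℕ) (hn : 12 ≤ n) (H : ThreeGraph)
    (u0 u1 u2 u3 u4 : ℕ) (t : Finset ℕ)
    (hval : H.IsValid) (hcard : H.verts.card = n) (hconn : H.Connected)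
    (hP : H.Free pathP) (hC : H.Free triangleC)
    (hdist : List.Pairwise (· ≠ ·) [u0, u1, u2, u3, u4])
    (he1 : ({u0, u1, u2} : Finset ℕ) ∈ H.edges)
    (he2 : ({u2, u3, u4} : Finset ℕ) ∈ H.edges)
    (ht : t ∈ H.edges) (htdisj : Disjoint t ({u0, u1, u2, u3, u4} : Finset ℕ))
    (hW1 : 5 ≤ (W1set H {u0, u1, u2, u3, u4}).card)
    (hH1 : (H1set H {u0, u1, u2, u3, u4}).Nonempty) :
    H.edges.card < (n - 6).choose 2 + 10 := by
  subst hcard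
  have hU : ({u0, u1, u2} ∪ {u2, u3, u4} : Finset ℕ) = {u0, u1, u2, u3, u4} := by
    ext; grind
  have hinter : ({u0, u1, u2} ∩ {u2, u3, u4} : Finset ℕ) = {u2} := by
    ext; grind
  rw [← hU] at hW1 hH1
  exact fact_W1_ge_five_general H _ _ hval hP hC he1 he2 (by rw [hinter, Finset.card_singleton])
    hW1 hH1
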